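/- arXiv:1705.09756 — 11 statements merged into one kernel-verified Lean document; each statement's English description precedes it below -/
import Mathlib

section
/- For each index i, the DeGroot-Friedkin map F is continuous at the vertex e_i of the simplex in the following sense: for every ε > 0 there exists δ > 0 such that for all x ∈ Δ̃_n with ‖x − e_i‖₁ < δ one has ‖F(x) − e_i‖₁ < ε. Consequently the extension F̄ : Δ_n → Δ_n defined by F̄(x) = F(x) for x ∈ Δ̃_n and F̄(e_i) = e_i is continuous on Δ_n. -/
/-!
Near the vertex `e_i` the singular factor `1 / (1 - x_i)` of the DeGroot-Friedkin map cancels: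
multiplying every `γ_j / (1 - x_j)` by `1 - x_i` does not change the normalized vector, but turns the
`i`-th weight into the constant `γ_i` and every other weight into `γ_j (1 - x_i) / (1 - x_j)`. The
resulting map `rescaledDF γ i` agrees with `DF γ` wherever `x_i ≠ 1`, is continuous at `e_i`, and sends
`e_i` to itself (`rescaledDF_eq_DF`, `continuousAt_rescaledDF`, `rescaledDF_vertex`). This gives both
the `ε`-`δ` statement and the continuity of the extension at the vertices. At the other points of the
simplex all coordinates are below `1` (`ne_one_of_mem_punctSimplex`), so the map is a quotient of
continuous functions there with positive denominators.
-/

open Finset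

/-- The DeGroot-Friedkin map: `F(x)_i = α(x) · γ_i/(1 - x_i)` with
`α(x) = (∑_j γ_j/(1 - x_j))⁻¹`. -/
noncomputable def DF {n : ℕ} (γ : Fin n → ℝ) (x : Fin n → ℝ) : Fin n → ℝ :=
  fun i => (∑ j, γ j / (1 - x j))⁻¹ * (γ i / (1 - x i))

/-- The simplex Δₙ. -/
def simplex (n : ℕ) : Set (Fin n → ℝ) := {x | (∀ i, 0 ≤ x i) ∧ ∑ i, x i = 1}

/-- The interior int(Δₙ) of the simplex. -/
def intSimplex (n : ℕ) : Set (Fin n → ℝ) := {x | (∀ i, 0 < x i) ∧ ∑ i, x i = 1}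

/-- The standard basis vector (vertex of the simplex) eᵢ. -/
def vertex {n : ℕ} (i : Fin n) : Fin n → ℝ := fun j => if j = i then 1 else 0

/-- The punctured simplex Δ̃ₙ = Δₙ \ {e₁, …, eₙ}. -/
def punctSimplex (n : ℕ) : Set (Fin n → ℝ) := simplex n \ (⋃ i, {vertex i})

/-- The 1-norm ‖x‖₁ = ∑ i, |x i|. -/
noncomputable def norm1 {n : ℕ} (x : Fin n → ℝ) : ℝ := ∑ i, |x i|

/-- The weights `γ_j / (1 - x_j)` multiplied by `1 - x_i`, with the `i`-th one set to its
cancelled value `γ_i`. -/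
noncomputable def rescaledWeight {n : ℕ} (γ : Fin n → ℝ) (i : Fin n) (x : Fin n → ℝ)
    (j : Fin n) : ℝ :=
  if j = i then γ i else γ j * (1 - x i) / (1 - x j)

/-- The DeGroot-Friedkin map written with the rescaled weights, hence regular at `e_i`. -/
noncomputable def rescaledDF {n : ℕ} (γ : Fin n → ℝ) (i : Fin n) (x : Fin n → ℝ) : Fin n → ℝ :=
  fun j => (∑ k, rescaledWeight γ i x k)⁻¹ * rescaledWeight γ i x j

lemma rescaledWeight_vertex {n : ℕ} (γ : Fin n → ℝ) (i : Fin n) :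
    rescaledWeight γ i (vertex i) = fun j => if j = i then γ i else 0 := by
  funext j
  simp [rescaledWeight, vertex]

lemma rescaledDF_vertex {n : ℕ} (γ : Fin n → ℝ) (i : Fin n) (hγ : γ i ≠ 0) :
    rescaledDF γ i (vertex i) = vertex i := by
  funext j
  simp only [rescaledDF, rescaledWeight_vertex]
  by_cases h : j = i <;> simp [h, vertex, hγ]

lemma rescaledDF_eq_DF {n : ℕ} (γ : Fin n → ℝ) (i : Fin n) (x : Fin n → ℝ) (hx : x i ≠ 1) :
    rescaledDF γ i x = DF γ x := by
  have h1 : 1 - x i ≠ 0 := sub_ne_zero.mpr hx.symm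
  have hw : ∀ j, rescaledWeight γ i x j = (1 - x i) * (γ j / (1 - x j)) := by
    intro j
    by_cases h : j = i
    · subst h
      simp [rescaledWeight]
      field_simp
    · simp only [rescaledWeight, h, if_false]
      ring
  funext j
  simp only [rescaledDF, DF, hw, ← Finset.mul_sum, mul_inv]
  field_simp

lemma continuousAt_rescaledDF {n : ℕ} (γ : Fin n → ℝ) (i : Fin n) (hγ : γ i ≠ 0) :
    ContinuousAt (rescaledDF γ i) (vertex i) := by
  have hw : ∀ j, ContinuousAt (fun x => rescaledWeight γ i x j) (vertex i) := by
    intro j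
    by_cases h : j = i
    · simp only [rescaledWeight, h, if_true]
      exact continuousAt_const
    · simp only [rescaledWeight, h, if_false]
      refine ContinuousAt.div (Continuous.continuousAt (by fun_prop))
        (Continuous.continuousAt (by fun_prop)) ?_
      simp [vertex, h]
  refine continuousAt_pi.mpr fun j => ContinuousAt.mul (ContinuousAt.inv₀ ?_ ?_) (hw j)
  · exact tendsto_finsetSum _ fun k _ => hw k
  · simpa [rescaledWeight_vertex] using hγ

lemma eq_vertex_of_apply_eq_one {n : ℕ} {x : Fin n → ℝ} (hx : x ∈ simplex n) {i : Fin n}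
    (hi : x i = 1) : x = vertex i := by
  obtain ⟨h0, hs⟩ := hx
  funext j
  by_cases h : j = i
  · simp [vertex, h, hi]
  · have hle : ∑ k ∈ {j, i}, x k ≤ ∑ k, x k :=
      Finset.sum_le_sum_of_subset_of_nonneg (Finset.subset_univ _) fun k _ _ => h0 k
    rw [Finset.sum_pair h, hs, hi] at hle
    simp only [vertex, h, if_false]
    linarith [h0 j]

lemma ne_one_of_mem_punctSimplex {n : ℕ} {x : Fin n → ℝ} (hx : x ∈ punctSimplex n) (i : Fin n) :
    x i ≠ 1 := fun h =>
  hx.2 (Set.mem_iUnion.mpr ⟨i, eq_vertex_of_apply_eq_one hx.1 h⟩)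

lemma mem_punctSimplex_of_ne_one {n : ℕ} {x : Fin n → ℝ} (hx : x ∈ simplex n)
    (h : ∀ i, x i ≠ 1) : x ∈ punctSimplex n := by
  refine ⟨hx, fun hv => ?_⟩
  obtain ⟨i, rfl⟩ := Set.mem_iUnion.mp hv
  exact h i (by simp [vertex])

lemma continuousAt_DF {n : ℕ} (γ : Fin n → ℝ) (hγ : ∀ i, 0 < γ i) {p : Fin n → ℝ}
    (hp : p ∈ punctSimplex n) : ContinuousAt (DF γ) p := by
  have hlt : ∀ k, 0 < 1 - p k := by
    intro k
    have hle : p k ≤ ∑ j, p j :=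
      Finset.single_le_sum (fun j _ => hp.1.1 j) (Finset.mem_univ k)
    rw [hp.1.2] at hle
    exact sub_pos.mpr (lt_of_le_of_ne hle (ne_one_of_mem_punctSimplex hp k))
  have hw : ∀ k, ContinuousAt (fun x : Fin n → ℝ => γ k / (1 - x k)) p := fun k =>
    ContinuousAt.div (Continuous.continuousAt (by fun_prop))
        (Continuous.continuousAt (by fun_prop)) (hlt k).ne'
  refine continuousAt_pi.mpr fun j => ContinuousAt.mul (ContinuousAt.inv₀ ?_ ?_) (hw j)
  · exact tendsto_finsetSum _ fun k _ => hw k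
  · exact (Finset.sum_pos (fun k _ => div_pos (hγ k) (hlt k)) ⟨j, Finset.mem_univ j⟩).ne'

lemma dist_le_norm1 {n : ℕ} (x y : Fin n → ℝ) : dist x y ≤ norm1 (x - y) := by
  refine (dist_pi_le_iff (Finset.sum_nonneg fun i _ => abs_nonneg _)).mpr fun i => ?_
  rw [Real.dist_eq]
  exact Finset.single_le_sum (f := fun i => |(x - y) i|) (fun j _ => abs_nonneg _)
    (Finset.mem_univ i)

/-- F is continuous at each vertex eᵢ in the ε-δ sense on Δ̃ₙ, and
consequently the extension F̄ with F̄(x) = F(x) on Δ̃ₙ and F̄(eᵢ) = eᵢ is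
continuous on Δₙ. -/
theorem stmt1 {n : ℕ} (hn : 3 ≤ n) (γ : Fin n → ℝ)
    (hγpos : ∀ i, 0 < γ i) (hγsum : ∑ i, γ i = 1) :
    (∀ i : Fin n, ∀ ε > (0 : ℝ), ∃ δ > (0 : ℝ), ∀ x ∈ punctSimplex n,
        norm1 (x - vertex i) < δ → norm1 (DF γ x - vertex i) < ε) ∧
    (∀ Fbar : (Fin n → ℝ) → (Fin n → ℝ),
        (∀ x ∈ punctSimplex n, Fbar x = DF γ x) →
        (∀ i : Fin n, Fbar (vertex i) = vertex i) →
        ContinuousOn Fbar (simplex n)) := by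
  refine ⟨fun i ε hε => ?_, fun Fbar hF hV p hp => ?_⟩
  · have hcont : ContinuousAt (fun x => norm1 (rescaledDF γ i x - vertex i)) (vertex i) := by
      have hn1 : Continuous fun y : Fin n → ℝ => norm1 (y - vertex i) := by
        unfold norm1
        fun_prop
      exact hn1.continuousAt.comp (continuousAt_rescaledDF γ i (hγpos i).ne')
    have hev : ∀ᶠ x in nhds (vertex i), norm1 (rescaledDF γ i x - vertex i) < ε := by
      refine hcont.eventually_lt continuousAt_const ?_
      simpa [rescaledDF_vertex γ i (hγpos i).ne', norm1] using hε
    obtain ⟨δ, hδ, hball⟩ := Metric.eventually_nhds_iff.mp hev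
    refine ⟨δ, hδ, fun x hx hxδ => ?_⟩
    rw [← rescaledDF_eq_DF γ i x (ne_one_of_mem_punctSimplex hx i)]
    exact hball ((dist_le_norm1 x (vertex i)).trans_lt hxδ)
  · by_cases hpv : ∃ i, p = vertex i
    · obtain ⟨i, rfl⟩ := hpv
      refine (continuousAt_rescaledDF γ i (hγpos i).ne').continuousWithinAt.congr_of_eventuallyEq
        ?_ (by rw [hV, rescaledDF_vertex γ i (hγpos i).ne'])
      -- Close to `e_i` the simplex contains no other vertex.
      have hfar : ∀ᶠ x in nhds (vertex i), ∀ k, k ≠ i → x k ≠ 1 := by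
        refine Filter.eventually_all.mpr fun k => ?_
        by_cases hk : k = i
        · simp [hk]
        · have h1 : vertex i k ≠ 1 := by simp [vertex, hk]
          filter_upwards [(continuous_apply k).continuousAt.eventually_ne h1] with x hx _ using hx
      filter_upwards [self_mem_nhdsWithin, nhdsWithin_le_nhds hfar] with x hxS hx
      by_cases hxi : x i = 1
      · rw [eq_vertex_of_apply_eq_one hxS hxi, hV, rescaledDF_vertex γ i (hγpos i).ne']
      · rw [rescaledDF_eq_DF γ i x hxi]
        refine hF x (mem_punctSimplex_of_ne_one hxS fun k => ?_)
        by_cases hk : k = i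
        · rwa [hk]
        · exact hx k hk
    · have hpP : p ∈ punctSimplex n :=
        mem_punctSimplex_of_ne_one hp fun i hi => hpv ⟨i, eq_vertex_of_apply_eq_one hp hi⟩
      refine (continuousAt_DF γ hγpos hpP).continuousWithinAt.congr_of_eventuallyEq
        ?_ (hF p hpP)
      have hne : ∀ᶠ x in nhds p, ∀ k, x k ≠ 1 :=
        Filter.eventually_all.mpr fun k =>
          (continuous_apply k).continuousAt.eventually_ne (ne_one_of_mem_punctSimplex hpP k)
      filter_upwards [self_mem_nhdsWithin, nhdsWithin_le_nhds hne] with x hxS hx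
      exact hF x (mem_punctSimplex_of_ne_one hxS hx)
end

section
/- For every y ∈ int(Δ_n) with n ≥ 3, consider the matrix H(y) = Θ(y)·Φ(y), where Θ(y) = diag(1/(1 − y_1),…,1/(1 − y_n)) and Φ(y) = diag(y) − y·yᵀ; its entries are H_{ii} = y_i and H_{ij} = −y_i y_j/(1 − y_i) for j ≠ i. Then: (i) every eigenvalue of H(y) is real and nonnegative; (ii) H(y)·𝟙_n = 0 and 0 is a simple eigenvalue of H(y); (iii) the trace of H(y) equals 1; and (iv) every eigenvalue of H(y) is strictly less than 1. -/
/-!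
Write `Φ = diag(y) - y yᵀ` and `D = diag((1 - yᵢ)^(-1/2))`. Then `H = D (D Φ)` has the same
characteristic polynomial as the symmetric matrix `S = D Φ D` (`charpoly_HMat`), so its spectrum
is that of `S`. For `m = ∑ yᵢ xᵢ` one has `xᵀ Φ x = ∑ yᵢ (xᵢ - m)²`, so `Φ`, hence `S`, is positive
semidefinite and the eigenvalues are real and nonnegative. The kernel of `Φ` is the line spanned by
the all-ones vector, so exactly one eigenvalue of `S` vanishes (`existsUnique_eigenvalue_zero`).
Finally the eigenvalues sum to `trace H = ∑ yᵢ = 1`; as `n ≥ 3`, any eigenvalue is accompanied by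
another strictly positive one, hence is strictly less than `1`.
-/

open Finset

open Matrix Polynomial

/-- The matrix H(y) = Θ(y)·Φ(y) where Θ(y) = diag(1/(1−y_i)) and
Φ(y) = diag(y) − y·yᵀ; its entries are H_{ii} = y_i and
H_{ij} = −y_i y_j/(1 − y_i) for j ≠ i. -/
noncomputable def HMat {n : ℕ} (y : Fin n → ℝ) : Matrix (Fin n) (Fin n) ℝ :=
  Matrix.diagonal (fun i => (1 - y i)⁻¹) * (Matrix.diagonal y - Matrix.vecMulVec y y)

section Auxiliary

variable {n : ℕ} {y : Fin n → ℝ}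

/-- The matrix `Φ(y) = diag(y) - y yᵀ`. -/
def PhiMat (y : Fin n → ℝ) : Matrix (Fin n) (Fin n) ℝ :=
  Matrix.diagonal y - Matrix.vecMulVec y y

/-- The square root `diag((1 - yᵢ)^(-1/2))` of `Θ(y)`. -/
noncomputable def sqrtTheta (y : Fin n → ℝ) : Matrix (Fin n) (Fin n) ℝ :=
  Matrix.diagonal (fun i => (√(1 - y i))⁻¹)

/-- The symmetrization `Θ^(1/2) Φ Θ^(1/2)` of `H(y)`. -/
noncomputable def SMat (y : Fin n → ℝ) : Matrix (Fin n) (Fin n) ℝ :=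
  sqrtTheta y * PhiMat y * sqrtTheta y

lemma lt_one_of_mem_intSimplex (hn : 3 ≤ n) (hy : y ∈ intSimplex n) (i : Fin n) : y i < 1 := by
  have : Nontrivial (Fin n) := Fin.nontrivial_iff_two_le.mpr (by omega)
  obtain ⟨j, hj⟩ := exists_ne i
  rw [← hy.2]
  exact Finset.single_lt_sum hj (Finset.mem_univ i) (Finset.mem_univ j) (hy.1 j)
    fun k _ _ => (hy.1 k).le

lemma PhiMat_mulVec (y x : Fin n → ℝ) (i : Fin n) :
    (PhiMat y *ᵥ x) i = y i * (x i - ∑ j, y j * x j) := by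
  simp only [PhiMat, Matrix.sub_mulVec, Pi.sub_apply, Matrix.mulVec_diagonal,
    Matrix.vecMulVec_mulVec, dotProduct]
  simp [mul_sub]

/-- With `m = ∑ yᵢ xᵢ`, the quadratic form of `Φ` is the variance `∑ yᵢ (xᵢ - m)²`. -/
lemma PhiMat_posSemidef (hy : y ∈ intSimplex n) : (PhiMat y).PosSemidef := by
  refine Matrix.PosSemidef.of_dotProduct_mulVec_nonneg ?_ fun x => ?_
  · ext i j
    by_cases h : i = j
    · simp [PhiMat, h]
    · simp [PhiMat, h, Ne.symm h, Matrix.vecMulVec_apply, mul_comm]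
  · set m := ∑ j, y j * x j with hm
    have key : star x ⬝ᵥ (PhiMat y *ᵥ x) = ∑ i, y i * (x i - m) ^ 2 := by
      have h1 : star x ⬝ᵥ (PhiMat y *ᵥ x) = ∑ i, x i * (y i * (x i - m)) := by
        simp [dotProduct, PhiMat_mulVec, hm]
      have h2 : ∑ i, m * (y i * (x i - m)) = 0 := by
        rw [← Finset.mul_sum]
        simp only [mul_sub, Finset.sum_sub_distrib, ← Finset.sum_mul, hy.2]
        simp [← hm]
      rw [h1, ← sub_zero (∑ i, x i * (y i * (x i - m))), ← h2, ← Finset.sum_sub_distrib]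
      exact Finset.sum_congr rfl fun i _ => by ring
    rw [key]
    exact Finset.sum_nonneg fun i _ => mul_nonneg (hy.1 i).le (sq_nonneg _)

lemma SMat_posSemidef (hy : y ∈ intSimplex n) : (SMat y).PosSemidef := by
  have h := (PhiMat_posSemidef hy).conjTranspose_mul_mul_same (sqrtTheta y)
  have hD : (sqrtTheta y)ᴴ = sqrtTheta y := by
    simp [sqrtTheta]
  rwa [hD] at h

lemma HMat_eq (hlt : ∀ i, y i < 1) : HMat y = sqrtTheta y * (sqrtTheta y * PhiMat y) := by
  rw [← Matrix.mul_assoc, sqrtTheta, Matrix.diagonal_mul_diagonal, HMat, PhiMat]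
  congr 2
  ext i
  rw [← mul_inv, Real.mul_self_sqrt (sub_nonneg.mpr (hlt i).le)]

lemma charpoly_HMat (hlt : ∀ i, y i < 1) : (HMat y).charpoly = (SMat y).charpoly := by
  rw [HMat_eq hlt, Matrix.charpoly_mul_comm, SMat]

lemma trace_HMat (hlt : ∀ i, y i < 1) (hy : y ∈ intSimplex n) : (HMat y).trace = 1 := by
  rw [← hy.2]
  refine Finset.sum_congr rfl fun i _ => ?_
  have h : 1 - y i ≠ 0 := (sub_pos.mpr (hlt i)).ne'
  simp only [HMat, Matrix.diag_apply, Matrix.diagonal_mul, Matrix.sub_apply,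
    Matrix.diagonal_apply_eq, Matrix.vecMulVec_apply]
  field_simp

lemma trace_SMat (hlt : ∀ i, y i < 1) (hy : y ∈ intSimplex n) : (SMat y).trace = 1 := by
  rw [← trace_HMat hlt hy, HMat_eq hlt, Matrix.trace_mul_comm, SMat]

lemma PhiMat_mulVec_one (hy : y ∈ intSimplex n) : PhiMat y *ᵥ (fun _ => (1 : ℝ)) = 0 := by
  ext i
  simp [PhiMat_mulVec, hy.2]

/-- The kernel of `S` lies in the line spanned by `√(1 - yᵢ)`, because `Φ x = 0` makes `x`
constant. -/
lemma SMat_ker (hlt : ∀ i, y i < 1) (hy : y ∈ intSimplex n) {v : Fin n → ℝ}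
    (hv : SMat y *ᵥ v = 0) : ∃ a : ℝ, ∀ i, v i = a * √(1 - y i) := by
  refine ⟨∑ j, y j * (sqrtTheta y *ᵥ v) j, fun i => ?_⟩
  have hs : √(1 - y i) ≠ 0 := (Real.sqrt_pos.mpr (sub_pos.mpr (hlt i))).ne'
  have h := congrFun hv i
  rw [SMat, ← Matrix.mulVec_mulVec, ← Matrix.mulVec_mulVec] at h
  nth_rewrite 1 [sqrtTheta] at h
  rw [Matrix.mulVec_diagonal, PhiMat_mulVec, Pi.zero_apply] at h
  have h' := (mul_eq_zero.mp ((mul_eq_zero.mp h).resolve_left (inv_ne_zero hs))).resolve_left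
    (hy.1 i).ne'
  rw [← sub_eq_zero.mp h', sqrtTheta, Matrix.mulVec_diagonal]
  field_simp

lemma existsUnique_eigenvalue_zero (hn : 3 ≤ n) (hlt : ∀ i, y i < 1) (hy : y ∈ intSimplex n)
    (hS : (SMat y).IsHermitian) : ∃! i, hS.eigenvalues i = 0 := by
  have hker : ∀ i, hS.eigenvalues i = 0 →
      ∃ a : ℝ, a ≠ 0 ∧ ∀ k, hS.eigenvectorBasis i k = a * √(1 - y k) := by
    intro i hi
    have h := hS.mulVec_eigenvectorBasis i
    rw [hi, zero_smul] at h
    obtain ⟨a, ha⟩ := SMat_ker hlt hy h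
    refine ⟨a, ?_, ha⟩
    rintro rfl
    refine hS.eigenvectorBasis.orthonormal.ne_zero i ?_
    ext k
    simpa using ha k
  have hdet : (SMat y).det = 0 := by
    have hPhi : (PhiMat y).det = 0 := by
      refine Matrix.exists_mulVec_eq_zero_iff.mp ⟨fun _ => 1, ?_, PhiMat_mulVec_one hy⟩
      intro h
      exact one_ne_zero (congrFun h ⟨0, by omega⟩)
    simp [SMat, hPhi]
  rw [hS.det_eq_prod_eigenvalues, Finset.prod_eq_zero_iff] at hdet
  obtain ⟨i, -, hi⟩ := hdet
  refine ⟨i, by simpa using hi, fun j hj => ?_⟩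
  by_contra hji
  obtain ⟨a, ha, hva⟩ := hker i (by simpa using hi)
  obtain ⟨b, hb, hvb⟩ := hker j hj
  -- Two distinct null vectors of an orthonormal basis would be orthogonal, yet both are nonzero
  -- multiples of the same vector.
  have horth := hS.eigenvectorBasis.orthonormal.2 hji
  have hpos : 0 < ∑ k, (1 - y k) :=
    Finset.sum_pos (fun k _ => sub_pos.mpr (hlt k)) ⟨⟨0, by omega⟩, Finset.mem_univ _⟩
  have : a * b * ∑ k, (1 - y k) = 0 := by
    rw [← horth, PiLp.inner_apply, Finset.mul_sum]
    refine Finset.sum_congr rfl fun k _ => ?_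
    rw [hva, hvb]
    have := Real.mul_self_sqrt (sub_nonneg.mpr (hlt k).le)
    simp only [RCLike.inner_apply, conj_trivial]
    linear_combination -a * b * this
  exact mul_ne_zero (mul_ne_zero ha hb) hpos.ne' this

/-- The eigenvalues of `S` are nonnegative with sum `1`, and at least two of them are nonzero. -/
lemma eigenvalue_lt_one (hn : 3 ≤ n) (hlt : ∀ i, y i < 1) (hy : y ∈ intSimplex n)
    (hS : (SMat y).IsHermitian) (i : Fin n) : hS.eigenvalues i < 1 := by
  obtain ⟨i₀, -, huniq⟩ := existsUnique_eigenvalue_zero hn hlt hy hS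
  have hnn : ∀ k, 0 ≤ hS.eigenvalues k := fun k => (SMat_posSemidef hy).eigenvalues_nonneg k
  obtain ⟨j, hj⟩ : ∃ j, j ∉ ({i, i₀} : Finset (Fin n)) := by
    by_contra! h
    have h1 := Finset.card_le_card (fun k _ => h k : (Finset.univ : Finset (Fin n)) ⊆ {i, i₀})
    have h2 := Finset.card_le_two (a := i) (b := i₀)
    rw [Finset.card_univ, Fintype.card_fin] at h1
    omega
  simp only [Finset.mem_insert, Finset.mem_singleton, not_or] at hj
  have hjpos : 0 < hS.eigenvalues j := (hnn j).lt_of_ne' fun h => hj.2 (huniq j h)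
  have hsum : ∑ k, hS.eigenvalues k = 1 := by
    have h := hS.trace_eq_sum_eigenvalues
    rw [trace_SMat hlt hy] at h
    simpa using h.symm
  rw [← hsum]
  exact Finset.single_lt_sum hj.1 (Finset.mem_univ i) (Finset.mem_univ j) hjpos
    fun k _ _ => hnn k

end Auxiliary

/-- for y ∈ int(Δₙ) with n ≥ 3, (i) every (complex) eigenvalue of
H(y) is real and nonnegative; (ii) H(y)·𝟙 = 0 and 0 is a simple eigenvalue of
H(y); (iii) trace H(y) = 1; (iv) every eigenvalue of H(y) is strictly less
than 1. -/
theorem stmt5 {n : ℕ} (hn : 3 ≤ n) (y : Fin n → ℝ) (hy : y ∈ intSimplex n) :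
    (∀ μ : ℂ, (((HMat y).map (algebraMap ℝ ℂ)).charpoly).IsRoot μ →
        μ.im = 0 ∧ 0 ≤ μ.re ∧ μ.re < 1) ∧
    (HMat y) *ᵥ (fun _ => (1 : ℝ)) = 0 ∧
    ((HMat y).charpoly).rootMultiplicity 0 = 1 ∧
    (HMat y).trace = 1 := by
  have hlt := lt_one_of_mem_intSimplex hn hy
  have hS : (SMat y).IsHermitian := (SMat_posSemidef hy).isHermitian
  refine ⟨fun μ hμ => ?_, ?_, ?_, trace_HMat hlt hy⟩
  · rw [Matrix.charpoly_map, charpoly_HMat hlt, hS.charpoly_eq, Polynomial.IsRoot.def,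
      Polynomial.eval_map, Polynomial.eval₂_finsetProd, Finset.prod_eq_zero_iff] at hμ
    obtain ⟨i, -, hi⟩ := hμ
    have hμi : μ = (hS.eigenvalues i : ℂ) := by simpa [sub_eq_zero] using hi
    subst hμi
    exact ⟨Complex.ofReal_im _, (SMat_posSemidef hy).eigenvalues_nonneg i,
      eigenvalue_lt_one hn hlt hy hS i⟩
  · change (_ * PhiMat y) *ᵥ _ = 0
    rw [← Matrix.mulVec_mulVec, PhiMat_mulVec_one hy, Matrix.mulVec_zero]
  · obtain ⟨i₀, hi₀, huniq⟩ := existsUnique_eigenvalue_zero hn hlt hy hS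
    rw [charpoly_HMat hlt, ← Polynomial.count_roots, hS.roots_charpoly_eq_eigenvalues,
      Multiset.count_map, ← Finset.filter_val, Finset.card_val, Finset.card_eq_one]
    refine ⟨i₀, ?_⟩
    ext k
    simp only [Finset.mem_filter, Finset.mem_univ, true_and, Finset.mem_singleton]
    constructor
    · intro h
      exact huniq k (by simpa using h.symm)
    · rintro rfl
      simpa using hi₀.symm
end

section
/- Suppose max_i γ_i < 1/2 (the graph does not have star topology). Then the DeGroot-Friedkin map F has a unique fixed point x* ∈ int(Δ_n), this x* is the only fixed point of F in Δ̃_n, and convergence to it is exponential: there exists ρ ∈ (0,1) such that for every initial condition x(0) ∈ Δ̃_n there exists M > 0 with ‖x(s) − x*‖₁ ≤ M·ρ^s for all s ≥ 0, where x(s+1) = F(x(s)). -/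
/-!
The argument rests on a projective (Hilbert-metric type) contraction towards a fixed point `p`.

Existence of `p`: a positive `x` with `∑ xᵢ = 1` is fixed by the map iff `xᵢ (1 - xᵢ) = a γᵢ` for some
`a > 0`. Let `γ_m` be the largest weight, prescribe `x_m = t`, and let every other `xⱼ` be the smaller
root of `z (1 - z) = (γⱼ / γ_m) t (1 - t)`. The total mass is continuous in `t`, vanishes at `t = 0`,
and is at least `1` at `t = γ_m / (1 - γ_m)`, which is `< 1` because `γ_m < 1/2`. The intermediate
value theorem gives `p` (`exists_fixed`).

Contraction: say that `x` has spread at most `C` when `xᵢ / pᵢ ≤ (1 + C) xⱼ / pⱼ` for all `i, j`.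
Up to a common factor, `F(x)ᵢ / pᵢ` is the inverse of `Rᵢ = (1 - xᵢ) / (1 - pᵢ)`, and `Rᵢ` is the
average of the ratios `x_k / p_k`, `k ≠ i`, with weights `p_k / (1 - pᵢ) ≥ p_k`. If all ratios lie in
`[a, b]` and `l` is an index different from `i` and `j` (here `n ≥ 3` enters), then the common
contribution of `l` to `Rᵢ` and `Rⱼ` gives `Rᵢ - Rⱼ ≤ (1 - p_l) (b - a)`. Hence one step multiplies
the spread by at most `1 - min p` (`Spread.step`), and the 1-norm distance to `p` is at most twice
the spread (`Spread.norm1_le`). A non-vertex initial point is mapped into the interior, where the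
spread is finite. Uniqueness of the fixed point follows from convergence.
-/

open Finset

/-! ### Invariance of the simplex and contraction of the spread -/

/-- `Spread p x C`: the ratios `xᵢ / pᵢ` differ from one another by a factor of at most `1 + C`. -/
def Spread {n : ℕ} (p x : Fin n → ℝ) (C : ℝ) : Prop :=
  ∀ i j, x i / p i ≤ (1 + C) * (x j / p j)

lemma lt_one_of_mem_int {n : ℕ} (hn : 3 ≤ n) {x : Fin n → ℝ} (hx : x ∈ intSimplex n) (i : Fin n) :
    x i < 1 := by
  have : Nontrivial (Fin n) := Fin.nontrivial_iff_two_le.2 (by omega)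
  obtain ⟨j, hj⟩ := exists_ne i
  rw [← hx.2]
  exact Finset.single_lt_sum hj (mem_univ i) (mem_univ j) (hx.1 j) (fun k _ _ => (hx.1 k).le)

lemma lt_one_of_mem_punct {n : ℕ} {x : Fin n → ℝ} (hx : x ∈ punctSimplex n) (i : Fin n) :
    x i < 1 := by
  obtain ⟨⟨h0, h1⟩, hv⟩ := hx
  have hsplit := Finset.add_sum_erase univ x (mem_univ i)
  have hnn : 0 ≤ ∑ k ∈ univ.erase i, x k := Finset.sum_nonneg fun k _ => h0 k
  by_contra! hi
  have hz : ∑ k ∈ univ.erase i, x k = 0 := by linarith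
  refine hv (Set.mem_iUnion.2 ⟨i, ?_⟩)
  rw [Set.mem_singleton_iff]
  ext j
  by_cases hj : j = i
  · subst hj
    simp only [vertex, if_true]
    linarith
  · simp only [vertex, hj, if_false]
    exact (Finset.sum_eq_zero_iff_of_nonneg fun k _ => h0 k).1 hz j (by simp [hj])

lemma DF_mem_int {n : ℕ} (hn : 3 ≤ n) {γ : Fin n → ℝ} (hγ : ∀ i, 0 < γ i) {x : Fin n → ℝ}
    (hx : ∀ i, x i < 1) : DF γ x ∈ intSimplex n := by
  have : Nonempty (Fin n) := ⟨⟨0, by omega⟩⟩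
  have hq : ∀ i, 0 < γ i / (1 - x i) := fun i => div_pos (hγ i) (by linarith [hx i])
  have hS : 0 < ∑ j, γ j / (1 - x j) := Finset.sum_pos (fun i _ => hq i) univ_nonempty
  refine ⟨fun i => mul_pos (inv_pos.2 hS) (hq i), ?_⟩
  simp only [DF]
  rw [← Finset.mul_sum, inv_mul_cancel₀ hS.ne']

/-- `s - xᵢ` is the sum of the `x_k` with `k ≠ i`, so an upper bound `b` on the ratios, improved at
one index `l ≠ i`, passes to `(s - xᵢ) / (1 - pᵢ)`. A lower bound `a` is handled by applying this to
`-x` and `-a`; hence `x` is not assumed positive and its total mass `s` is arbitrary. -/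
lemma ratio_upper {n : ℕ} {p x : Fin n → ℝ} {b s : ℝ} (hp : p ∈ intSimplex n)
    (hs : ∑ k, x k = s) (hb : ∀ k, x k / p k ≤ b) {i l : Fin n} (hl : l ≠ i) (hi : p i < 1) :
    (s - x i) / (1 - p i) ≤ b - (b - x l / p l) * p l := by
  have hx := Finset.add_sum_erase univ x (mem_univ i)
  have hpp := Finset.add_sum_erase univ p (mem_univ i)
  have hmem : l ∈ univ.erase i := by simp [hl]
  have hsum : ∑ k ∈ univ.erase i, (b * p k - x k) = b * (1 - p i) - (s - x i) := by
    rw [Finset.sum_sub_distrib, ← Finset.mul_sum]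
    rw [hp.2] at hpp
    rw [hs] at hx
    rw [← hpp, ← hx]
    ring
  have hk : ∀ k, 0 ≤ b * p k - x k := fun k => by
    have := (div_le_iff₀ (hp.1 k)).1 (hb k)
    linarith
  have hone := Finset.single_le_sum (f := fun k => b * p k - x k) (fun k _ => hk k) hmem
  rw [hsum] at hone
  have hcancel : (b - x l / p l) * p l = b * p l - x l := by
    have := (hp.1 l).ne'
    field_simp
  rw [hcancel, div_le_iff₀ (by linarith)]
  nlinarith [hk l, hp.1 i, mul_nonneg (hk l) (hp.1 i).le]

/-- One step of the map contracts the spread by `1 - δ`, where `δ` bounds the entries of `p` from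
below. -/
lemma Spread.step {n : ℕ} (hn : 3 ≤ n) {γ p x : Fin n → ℝ} {C δ : ℝ} (hγ : ∀ i, 0 < γ i)
    (hp : p ∈ intSimplex n) (hfix : DF γ p = p) (hx : x ∈ intSimplex n) (hC : 0 ≤ C)
    (hδ : ∀ i, δ ≤ p i) (hδ1 : δ ≤ 1) (h : Spread p x C) : Spread p (DF γ x) ((1 - δ) * C) := by
  have : Nonempty (Fin n) := ⟨⟨0, by omega⟩⟩
  have hp1 := lt_one_of_mem_int hn hp
  have hx1 := lt_one_of_mem_int hn hx
  set T := ∑ j, γ j / (1 - p j) with hT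
  set S := ∑ j, γ j / (1 - x j) with hS
  have hTpos : 0 < T :=
    Finset.sum_pos (fun i _ => div_pos (hγ i) (by linarith [hp1 i])) univ_nonempty
  have hSpos : 0 < S :=
    Finset.sum_pos (fun i _ => div_pos (hγ i) (by linarith [hx1 i])) univ_nonempty
  have hR : ∀ i, 0 < (1 - x i) / (1 - p i) := fun i =>
    div_pos (by linarith [hx1 i]) (by linarith [hp1 i])
  have hratio : ∀ i, DF γ x i / p i = T / S * ((1 - x i) / (1 - p i))⁻¹ := fun i => by
    have hpi : p i = T⁻¹ * (γ i / (1 - p i)) := (congrFun hfix i).symm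
    have h1 : 1 - p i ≠ 0 := by linarith [hp1 i]
    have h2 : 1 - x i ≠ 0 := by linarith [hx1 i]
    have h3 := (hγ i).ne'
    calc DF γ x i / p i = (S⁻¹ * (γ i / (1 - x i))) / (T⁻¹ * (γ i / (1 - p i))) := by
          rw [← hpi]; rfl
      _ = _ := by
          have := hTpos.ne'
          have := hSpos.ne'
          field_simp
  obtain ⟨ia, ha⟩ := Finite.exists_min fun k => x k / p k
  obtain ⟨ib, hb⟩ := Finite.exists_max fun k => x k / p k
  have hba := h ib ia
  set a := x ia / p ia with ha'
  set b := x ib / p ib with hb'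
  have hab : a ≤ b := ha ib
  have key : ∀ i j, (1 - x i) / (1 - p i) ≤ (1 + (1 - δ) * C) * ((1 - x j) / (1 - p j)) := by
    intro i j
    by_cases hij : i = j
    · subst hij
      have : 0 ≤ (1 - δ) * C := mul_nonneg (by linarith) hC
      nlinarith [hR i, mul_nonneg this (hR i).le]
    obtain ⟨l, hl⟩ : ∃ l, l ∉ ({i, j} : Finset (Fin n)) := by
      by_contra! hall
      have h1 : (univ : Finset (Fin n)) ⊆ {i, j} := fun k _ => hall k
      have h2 := Finset.card_le_card h1
      have h3 := Finset.card_le_two (a := i) (b := j)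
      simp only [card_univ, Fintype.card_fin] at h2
      omega
    simp only [mem_insert, mem_singleton, not_or] at hl
    have hup := ratio_upper hp hx.2 hb hl.1 (hp1 i)
    have hlow := ratio_upper (x := fun k => -x k) (b := -a) (s := -1) hp
      (by rw [Finset.sum_neg_distrib, hx.2])
      (fun k => by rw [neg_div]; exact neg_le_neg (ha k)) hl.2 (hp1 j)
    have e : (-1 - -x j) / (1 - p j) = -((1 - x j) / (1 - p j)) := by ring
    simp only [e, neg_div] at hlow
    have hla := ha l
    have hlb := hb l
    have hpl := hp.1 l
    have hpl1 := hp1 l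
    have hdl := hδ l
    generalize (1 - x i) / (1 - p i) = Ri at *
    generalize hRj : (1 - x j) / (1 - p j) = Rj at *
    have hdiff : Ri - Rj ≤ (1 - δ) * (b - a) := by nlinarith
    have haj : a ≤ Rj := by nlinarith
    have h1 : (1 - δ) * (b - a) ≤ (1 - δ) * (C * Rj) :=
      mul_le_mul_of_nonneg_left (by nlinarith) (by linarith)
    linarith
  intro i j
  rw [hratio i, hratio j]
  have hinv : ((1 - x i) / (1 - p i))⁻¹ ≤ (1 + (1 - δ) * C) * ((1 - x j) / (1 - p j))⁻¹ := by
    rw [← div_eq_mul_inv, inv_eq_one_div, div_le_div_iff₀ (hR i) (hR j), one_mul]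
    exact key j i
  calc T / S * ((1 - x i) / (1 - p i))⁻¹
      ≤ T / S * ((1 + (1 - δ) * C) * ((1 - x j) / (1 - p j))⁻¹) :=
        mul_le_mul_of_nonneg_left hinv (div_pos hTpos hSpos).le
    _ = _ := by ring

lemma Spread.norm1_le {n : ℕ} {p x : Fin n → ℝ} {C : ℝ} (hp : p ∈ intSimplex n)
    (hx : x ∈ intSimplex n) (hC : 0 ≤ C) (h : Spread p x C) : norm1 (x - p) ≤ 2 * C := by
  have hmul : ∀ i j, x i * p j ≤ (1 + C) * (x j * p i) := fun i j => by
    have := h i j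
    rw [← mul_div_assoc, div_le_div_iff₀ (hp.1 i) (hp.1 j)] at this
    linarith
  have h1 : ∀ i, x i ≤ (1 + C) * p i := fun i => by
    have := Finset.sum_le_sum fun j (_ : j ∈ univ) => hmul i j
    rw [← Finset.mul_sum, ← Finset.mul_sum, ← Finset.sum_mul, hp.2, hx.2] at this
    linarith
  have h2 : ∀ j, p j ≤ (1 + C) * x j := fun j => by
    have := Finset.sum_le_sum fun i (_ : i ∈ univ) => hmul i j
    rw [← Finset.mul_sum, ← Finset.mul_sum, ← Finset.sum_mul, hp.2, hx.2] at this
    linarith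
  calc norm1 (x - p) ≤ ∑ i, (C * p i + C * x i) := Finset.sum_le_sum fun i _ => by
        have hcp := mul_nonneg hC (hp.1 i).le
        have hcx := mul_nonneg hC (hx.1 i).le
        rw [Pi.sub_apply, abs_le]
        constructor <;> linarith [h1 i, h2 i]
    _ = 2 * C := by
        rw [Finset.sum_add_distrib, ← Finset.mul_sum, ← Finset.mul_sum, hp.2, hx.2]; ring

lemma exists_spread {n : ℕ} {p x : Fin n → ℝ} (hp : p ∈ intSimplex n) (hx : x ∈ intSimplex n) :
    ∃ C, 0 ≤ C ∧ Spread p x C := by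
  obtain ⟨B, hB⟩ := Finite.bddAbove_range
    (fun q : Fin n × Fin n => (x q.1 / p q.1) / (x q.2 / p q.2))
  refine ⟨max B 0, le_max_right _ _, fun i j => ?_⟩
  have hj : 0 < x j / p j := div_pos (hx.1 j) (hp.1 j)
  have h1 : (x i / p i) / (x j / p j) ≤ B := hB ⟨(i, j), rfl⟩
  rw [div_le_iff₀ hj] at h1
  nlinarith [le_max_left B 0]

/-! ### Existence of the fixed point -/

/-- The smaller root of `z (1 - z) = c`, for `c ≤ 1/4`. -/
noncomputable def smallRoot (c : ℝ) : ℝ := (1 - √(1 - 4 * c)) / 2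

lemma smallRoot_eq {c : ℝ} (hc : 4 * c ≤ 1) : smallRoot c * (1 - smallRoot c) = c := by
  have := Real.sq_sqrt (show 0 ≤ 1 - 4 * c by linarith)
  unfold smallRoot
  nlinarith

lemma le_smallRoot {c : ℝ} (hc : 4 * c ≤ 1) : c ≤ smallRoot c := by
  have := smallRoot_eq hc
  nlinarith [sq_nonneg (smallRoot c)]

lemma exists_fixed {n : ℕ} (hn : 3 ≤ n) {γ : Fin n → ℝ} (hγ : ∀ i, 0 < γ i)
    (hsum : ∑ i, γ i = 1) (hhalf : ∀ i, γ i < 1 / 2) : ∃ p ∈ intSimplex n, DF γ p = p := by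
  have : Nonempty (Fin n) := ⟨⟨0, by omega⟩⟩
  obtain ⟨m, hm⟩ := Finite.exists_max γ
  have hg := hγ m
  have hh := hhalf m
  let c : ℝ → Fin n → ℝ := fun t j => γ j / γ m * (t * (1 - t))
  have hc4 : ∀ t j, 0 ≤ t → t ≤ 1 → 4 * c t j ≤ 1 := fun t j h0 h1 => by
    have hr1 : γ j / γ m ≤ 1 := (div_le_one hg).2 (hm j)
    have h2 : 0 ≤ t * (1 - t) := mul_nonneg h0 (by linarith)
    have h3 : γ j / γ m * (t * (1 - t)) ≤ 1 * (t * (1 - t)) := mul_le_mul_of_nonneg_right hr1 h2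
    change 4 * (γ j / γ m * (t * (1 - t))) ≤ 1
    nlinarith [sq_nonneg (2 * t - 1)]
  let G : ℝ → ℝ := fun t => t + ∑ j ∈ univ.erase m, smallRoot (c t j)
  have hcont : Continuous G := by
    simp only [G, c, smallRoot]
    fun_prop
  set t₀ := γ m / (1 - γ m) with ht₀
  have ht₀pos : 0 < t₀ := div_pos hg (by linarith)
  have ht₀lt : t₀ < 1 := (div_lt_one (by linarith)).2 (by linarith)
  have hG0 : G 0 = 0 := by simp [G, c, smallRoot]
  have hG1 : 1 ≤ G t₀ := by
    have h1 : ∑ j ∈ univ.erase m, c t₀ j ≤ ∑ j ∈ univ.erase m, smallRoot (c t₀ j) :=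
      Finset.sum_le_sum fun j _ => le_smallRoot (hc4 t₀ j ht₀pos.le ht₀lt.le)
    have h2 : ∑ j ∈ univ.erase m, c t₀ j = 1 - t₀ := by
      have h3 := Finset.add_sum_erase univ γ (mem_univ m)
      have h4 : ∑ j ∈ univ.erase m, γ j = 1 - γ m := by linarith
      simp only [c]
      rw [← Finset.sum_mul, ← Finset.sum_div, h4, ht₀]
      have : 1 - γ m ≠ 0 := by linarith
      field_simp
    change 1 ≤ t₀ + _
    linarith
  obtain ⟨t, ⟨ht0, htt⟩, hGt⟩ := intermediate_value_Icc ht₀pos.le hcont.continuousOn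
    (show (1 : ℝ) ∈ Set.Icc (G 0) (G t₀) from ⟨by rw [hG0]; norm_num, hG1⟩)
  have ht1 : t < 1 := htt.trans_lt ht₀lt
  have htpos : 0 < t := by
    rcases ht0.eq_or_lt with h | h
    · rw [← h, hG0] at hGt
      norm_num at hGt
    · exact h
  have htt' : 0 < t * (1 - t) := mul_pos htpos (by linarith)
  let p : Fin n → ℝ := fun j => if j = m then t else smallRoot (c t j)
  have hpc : ∀ j, p j * (1 - p j) = t * (1 - t) / γ m * γ j := fun j => by
    by_cases hj : j = m
    · subst hj
      simp only [p, if_true]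
      field_simp
    · simp only [p, hj, if_false]
      rw [smallRoot_eq (hc4 t j ht0 ht1.le)]
      simp only [c]
      ring
  have hppos : ∀ j, 0 < p j := fun j => by
    by_cases hj : j = m
    · simp only [p, hj, if_true]
      exact htpos
    · simp only [p, hj, if_false]
      exact (mul_pos (div_pos (hγ j) hg) htt').trans_le (le_smallRoot (hc4 t j ht0 ht1.le))
  have hpsum : ∑ j, p j = 1 := by
    rw [← Finset.add_sum_erase univ p (mem_univ m), ← hGt]
    simp only [p, G, if_true]
    congr 1
    refine Finset.sum_congr rfl fun j hj => ?_
    rw [if_neg (Finset.ne_of_mem_erase hj)]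
  have hp : p ∈ intSimplex n := ⟨hppos, hpsum⟩
  refine ⟨p, hp, ?_⟩
  set α := t * (1 - t) / γ m with hα
  have hαpos : 0 < α := div_pos htt' hg
  have hq : ∀ j, γ j / (1 - p j) = α⁻¹ * p j := fun j => by
    have h1 : 1 - p j ≠ 0 := by linarith [lt_one_of_mem_int hn hp j]
    rw [div_eq_iff h1, mul_assoc, hpc j, inv_mul_cancel_left₀ hαpos.ne']
  ext i
  simp only [DF, hq]
  rw [← Finset.mul_sum, hpsum, mul_one, inv_inv, mul_inv_cancel_left₀ hαpos.ne']

/-! ### Exponential convergence -/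

/-- if max_i γ_i < 1/2, then F has a unique fixed point
x* ∈ int(Δₙ), x* is the only fixed point of F in Δ̃ₙ, and there is ρ ∈ (0,1)
such that every trajectory x(s+1) = F(x(s)) from x(0) ∈ Δ̃ₙ satisfies
‖x(s) − x*‖₁ ≤ M·ρ^s for some M > 0 and all s ≥ 0. -/
theorem stmt7 {n : ℕ} (hn : 3 ≤ n) (γ : Fin n → ℝ)
    (hγpos : ∀ i, 0 < γ i) (hγsum : ∑ i, γ i = 1)
    (hγhalf : ∀ i, γ i < 1 / 2) :
    ∃ xstar ∈ intSimplex n, DF γ xstar = xstar ∧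
      (∀ y ∈ punctSimplex n, DF γ y = y → y = xstar) ∧
      ∃ ρ : ℝ, 0 < ρ ∧ ρ < 1 ∧
        ∀ x0 ∈ punctSimplex n, ∃ M > (0 : ℝ),
          ∀ s : ℕ, norm1 ((DF γ)^[s] x0 - xstar) ≤ M * ρ ^ s := by
  obtain ⟨p, hp, hfix⟩ := exists_fixed hn hγpos hγsum hγhalf
  have : Nonempty (Fin n) := ⟨⟨0, by omega⟩⟩
  obtain ⟨i₀, hδ⟩ := Finite.exists_min p
  have hδ0 := hp.1 i₀
  have hδ1 := lt_one_of_mem_int hn hp i₀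
  set ρ := 1 - p i₀ with hρ
  have hρ0 : 0 < ρ := by linarith
  have hρ1 : ρ < 1 := by linarith
  have hconv : ∀ x0 ∈ punctSimplex n, ∃ M > (0 : ℝ),
      ∀ s : ℕ, norm1 ((DF γ)^[s] x0 - p) ≤ M * ρ ^ s := by
    intro x0 hx0
    have hy := DF_mem_int hn hγpos (lt_one_of_mem_punct hx0)
    obtain ⟨C, hC, hspread⟩ := exists_spread hp hy
    have hiter : ∀ s : ℕ, (DF γ)^[s] (DF γ x0) ∈ intSimplex n ∧
        Spread p ((DF γ)^[s] (DF γ x0)) (ρ ^ s * C) := by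
      intro s
      induction s with
      | zero => simpa using ⟨hy, hspread⟩
      | succ s ih =>
        rw [Function.iterate_succ_apply', pow_succ', mul_assoc]
        exact ⟨DF_mem_int hn hγpos (lt_one_of_mem_int hn ih.1),
          ih.2.step hn hγpos hp hfix ih.1 (by positivity) hδ hδ1.le⟩
    have hN : 0 ≤ norm1 (x0 - p) := Finset.sum_nonneg fun i _ => abs_nonneg _
    have hCρ : 0 ≤ 2 * C / ρ := by positivity
    -- The summand `norm1 (x0 - p)` handles `s = 0`, where `x0` may lie on the boundary and have
    -- infinite spread; dividing by `ρ` compensates for starting the contraction at `s = 1`.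
    refine ⟨norm1 (x0 - p) + 2 * C / ρ + 1, by positivity, fun s => ?_⟩
    cases s with
    | zero =>
      simp only [Function.iterate_zero, id_eq, pow_zero, mul_one]
      linarith
    | succ s =>
      rw [Function.iterate_succ_apply]
      calc norm1 ((DF γ)^[s] (DF γ x0) - p) ≤ 2 * (ρ ^ s * C) :=
            (hiter s).2.norm1_le hp (hiter s).1 (by positivity)
        _ = 2 * C / ρ * ρ ^ (s + 1) := by
            rw [pow_succ]
            field_simp
        _ ≤ _ := mul_le_mul_of_nonneg_right (by linarith) (by positivity)
  refine ⟨p, hp, hfix, fun y hy hyfix => ?_, ρ, hρ0, hρ1, hconv⟩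
  obtain ⟨M, -, hM⟩ := hconv y hy
  have hlim : Filter.Tendsto (fun s : ℕ => M * ρ ^ s) Filter.atTop (nhds 0) := by
    simpa using (tendsto_pow_atTop_nhds_zero_of_lt_one hρ0.le hρ1).const_mul M
  have hle : norm1 (y - p) ≤ 0 := ge_of_tendsto' hlim fun s => by
    simpa only [Function.iterate_fixed hyfix s] using hM s
  ext i
  have h1 : |(y - p) i| ≤ norm1 (y - p) :=
    Finset.single_le_sum (f := fun i => |(y - p) i|) (fun i _ => abs_nonneg _) (mem_univ i)
  have h2 := abs_nonpos_iff.1 (h1.trans hle)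
  exact sub_eq_zero.1 h2
end

section
/- Fix an index j with γ_j < 1/2 and set r_j = (1 − 2γ_j)/(1 − γ_j) > 0. Then for every r with 0 < r ≤ r_j and every x ∈ int(Δ_n): if x_j ≤ 1 − r, then F_j(x) < 1 − r, where F_j(x) is the j-th component of F(x). -/
/-!
Write `S = ∑ i, γ i / (1 - x i)` and `a = γ j / (1 - x j)`, so that `F_j(x) = a / S`. Every
`i ≠ j` has `0 < x i < 1`, hence `γ i < γ i / (1 - x i)`, and summing gives `S > a + (1 - γ j)`.
The bound `x j ≤ 1 - r` gives `a * r ≤ γ j`, while `r ≤ r_j` is equivalent to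
`γ j ≤ (1 - r) * (1 - γ j)`. Therefore `a = (1 - r) * a + a * r ≤ (1 - r) * (a + (1 - γ j))`,
which is less than `(1 - r) * S`.
-/

open Finset

/-- fix j with γ_j < 1/2 and set r_j = (1 − 2γ_j)/(1 − γ_j) > 0.
Then for every 0 < r ≤ r_j and every x ∈ int(Δₙ), x_j ≤ 1 − r implies
F_j(x) < 1 − r. -/
theorem stmt9 {n : ℕ} (hn : 3 ≤ n) (γ : Fin n → ℝ)
    (hγpos : ∀ i, 0 < γ i) (hγsum : ∑ i, γ i = 1)
    (j : Fin n) (hj : γ j < 1 / 2) :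
    0 < (1 - 2 * γ j) / (1 - γ j) ∧
    ∀ r : ℝ, 0 < r → r ≤ (1 - 2 * γ j) / (1 - γ j) →
      ∀ x ∈ intSimplex n, x j ≤ 1 - r → DF γ x j < 1 - r := by
  have hγj := hγpos j
  have h1 : 0 < 1 - γ j := by linarith
  refine ⟨div_pos (by linarith) h1, ?_⟩
  rintro r hr hrj x ⟨hx, hxs⟩ hxj
  rw [le_div_iff₀ h1] at hrj
  have hγr : γ j ≤ (1 - r) * (1 - γ j) := by nlinarith
  have hr1 : 0 < 1 - r := pos_of_mul_pos_left (hγj.trans_le hγr) h1.le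
  have hxj1 : 0 < 1 - x j := by linarith
  have hlt : ∀ i ∈ univ.erase j, γ i < γ i / (1 - x i) := by
    intro i hi
    have h2 : x i + ∑ k ∈ univ.erase i, x k = 1 := by
      rw [add_sum_erase _ _ (mem_univ i), hxs]
    have h3 : x j ≤ ∑ k ∈ univ.erase i, x k :=
      single_le_sum (f := x) (fun k _ => (hx k).le)
        (mem_erase.2 ⟨(ne_of_mem_erase hi).symm, mem_univ j⟩)
    have := hx i
    have := hx j
    rw [lt_div_iff₀ (by linarith)]
    nlinarith [mul_pos (hγpos i) (hx i)]
  have hne : (univ.erase j).Nonempty := by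
    rw [← card_pos, card_erase_of_mem (mem_univ j), card_univ, Fintype.card_fin]
    omega
  have hsum := sum_lt_sum_of_nonempty hne hlt
  have hγ' := add_sum_erase univ γ (mem_univ j)
  have hS := add_sum_erase univ (fun i => γ i / (1 - x i)) (mem_univ j)
  have ha : 0 < γ j / (1 - x j) := div_pos hγj hxj1
  have har : γ j / (1 - x j) * r ≤ γ j := by
    rw [div_mul_eq_mul_div, div_le_iff₀ hxj1]
    nlinarith
  have hlow : γ j / (1 - x j) + (1 - γ j) < ∑ i, γ i / (1 - x i) := by
    linarith
  unfold DF
  rw [inv_mul_lt_iff₀ (by linarith)]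
  nlinarith [mul_lt_mul_of_pos_left hlow hr1]
end

section
/- Suppose max_i γ_i < 1/2 and set r = min_j (1 − 2γ_j)/(1 − γ_j) > 0. Then the set A = {x ∈ int(Δ_n) : x_i ≤ 1 − r for all i} is invariant under the DeGroot-Friedkin map, and in fact F(A) is contained in the interior of A in the sense that for every x ∈ A and every i, 0 < F_i(x) < 1 − r. -/
/-!
Write `m = 1 - r`, so that `m = max_j γ_j/(1 - γ_j)`; then `0 < m < 1` and `γ_i ≤ m (1 - γ_i)`.
The bound `F_i(x) < m` is equivalent to
`(1 - m) γ_i/(1 - x_i) < m ∑_{j ≠ i} γ_j/(1 - x_j)`.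
Since `x_i ≤ m`, the left side is at most `γ_i`; since every `x_j` is positive, the right side
exceeds `m ∑_{j ≠ i} γ_j = m (1 - γ_i)`, which is at least `γ_i`.
-/

open Finset

/-- if max_i γ_i < 1/2 and r = min_j (1 − 2γ_j)/(1 − γ_j) > 0, then
the set A = {x ∈ int(Δₙ) : ∀ i, x_i ≤ 1 − r} is invariant under F, and in fact
for every x ∈ A, F(x) ∈ int(Δₙ) with 0 < F_i(x) < 1 − r for every i. -/
theorem stmt10 {n : ℕ} (hn : 3 ≤ n) (γ : Fin n → ℝ)
    (hγpos : ∀ i, 0 < γ i) (hγsum : ∑ i, γ i = 1)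
    (hγhalf : ∀ i, γ i < 1 / 2)
    (r : ℝ) (hr : IsLeast (Set.range fun j => (1 - 2 * γ j) / (1 - γ j)) r) :
    0 < r ∧
    ∀ x ∈ intSimplex n, (∀ i, x i ≤ 1 - r) →
      DF γ x ∈ intSimplex n ∧ ∀ i, 0 < DF γ x i ∧ DF γ x i < 1 - r := by
  obtain ⟨⟨k, hk⟩, hmin⟩ := hr
  have hr0 : 0 < r := by
    rw [← hk]
    exact div_pos (by linarith [hγhalf k]) (by linarith [hγhalf k])
  refine ⟨hr0, fun x hx hxr => ?_⟩
  obtain ⟨hxpos, -⟩ := hx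
  have hden : ∀ i, 0 < 1 - x i := fun i => by linarith [hxr i]
  have hterm : ∀ i, 0 < γ i / (1 - x i) := fun i => div_pos (hγpos i) (hden i)
  have hgain : ∀ i, 0 < γ i / (1 - x i) - γ i := fun i => by
    rw [sub_pos, lt_div_iff₀ (hden i)]
    nlinarith [mul_pos (hγpos i) (hxpos i)]
  have hS : 0 < ∑ j, γ j / (1 - x j) :=
    Finset.sum_pos (fun j _ => hterm j) ⟨k, Finset.mem_univ k⟩
  have hpos : ∀ i, 0 < DF γ x i := fun i => mul_pos (inv_pos.mpr hS) (hterm i)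
  refine ⟨⟨hpos, ?_⟩, fun i => ⟨hpos i, ?_⟩⟩
  · unfold DF
    rw [← Finset.mul_sum]
    exact inv_mul_cancel₀ hS.ne'
  · -- The terms with index other than `i` contribute strictly more than `1 - γ i` to the sum.
    have hrest : γ i / (1 - x i) - γ i < ∑ j, γ j / (1 - x j) - 1 := by
      have : Nontrivial (Fin n) := Fin.nontrivial_iff_two_le.mpr (by omega)
      obtain ⟨j, hj⟩ := exists_ne i
      have h := Finset.single_lt_sum (f := fun j => γ j / (1 - x j) - γ j) hj
        (Finset.mem_univ i) (Finset.mem_univ j) (hgain j) (fun l _ _ => (hgain l).le)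
      rwa [Finset.sum_sub_distrib, hγsum] at h
    have hγr : γ i ≤ (1 - r) * (1 - γ i) := by
      have h : r ≤ (1 - 2 * γ i) / (1 - γ i) := hmin ⟨i, rfl⟩
      rw [le_div_iff₀ (by linarith [hγhalf i])] at h
      linarith
    have hra : r * (γ i / (1 - x i)) ≤ γ i := by
      rw [← mul_div_assoc, div_le_iff₀ (hden i)]
      nlinarith [mul_nonneg (hγpos i).le (sub_nonneg.mpr (hxr i))]
    have hr1 : 0 < 1 - r := lt_of_lt_of_le (hxpos i) (hxr i)
    change (∑ j, γ j / (1 - x j))⁻¹ * (γ i / (1 - x i)) < 1 - r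
    rw [inv_mul_lt_iff₀ hS]
    nlinarith [mul_lt_mul_of_pos_left hrest hr1]
end

section
/- Suppose max_i γ_i < 1/2. Then every fixed point x* ∈ int(Δ_n) of the DeGroot-Friedkin map (i.e., F(x*) = x*) satisfies the componentwise upper bound x*_i < γ_i/(1 − γ_i) for every index i. -/
/-!
At an interior fixed point, `α γ_i = x_i (1 - x_i)` for every `i`; summing over `i` gives
`α = 1 - ∑ j, x_j ^ 2`. Hence `α (γ_i - x_i (1 - γ_i)) = x_i (∑ j, x_j ^ 2 - x_i ^ 2)`, which is
positive because there are at least two coordinates and all of them are positive. Since `α > 0`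
and `γ_i < 1`, this is the claimed bound.
-/

open Finset

/-- if max_i γ_i < 1/2, then every fixed point x* ∈ int(Δₙ) of F
satisfies x*_i < γ_i/(1 − γ_i) for every i. -/
theorem stmt11 {n : ℕ} (hn : 3 ≤ n) (γ : Fin n → ℝ)
    (hγpos : ∀ i, 0 < γ i) (hγsum : ∑ i, γ i = 1)
    (hγhalf : ∀ i, γ i < 1 / 2)
    (xstar : Fin n → ℝ) (hxs : xstar ∈ intSimplex n)
    (hfix : DF γ xstar = xstar) :
    ∀ i, xstar i < γ i / (1 - γ i) := by
  obtain ⟨hpos, hsum⟩ := hxs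
  have : Nontrivial (Fin n) := Fin.nontrivial_iff_two_le.mpr (by omega)
  have hlt : ∀ i, xstar i < 1 := by
    intro i
    obtain ⟨j, hj⟩ := exists_ne i
    rw [← hsum]
    exact single_lt_sum hj (mem_univ i) (mem_univ j) (hpos j) fun k _ _ => (hpos k).le
  have hsq : ∀ i, xstar i ^ 2 < ∑ j, xstar j ^ 2 := by
    intro i
    obtain ⟨j, hj⟩ := exists_ne i
    exact single_lt_sum (f := fun j => xstar j ^ 2) hj (mem_univ i) (mem_univ j)
      (pow_pos (hpos j) 2) fun k _ _ => sq_nonneg _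
  set A : ℝ := (∑ j, γ j / (1 - xstar j))⁻¹ with hA
  have hApos : 0 < A :=
    inv_pos.mpr (sum_pos (fun j _ => div_pos (hγpos j) (sub_pos.mpr (hlt j))) univ_nonempty)
  have hfix' : ∀ i, A * γ i = xstar i * (1 - xstar i) := by
    intro i
    have h : A * (γ i / (1 - xstar i)) = xstar i := congrFun hfix i
    have h1 : 1 - xstar i ≠ 0 := (sub_pos.mpr (hlt i)).ne'
    rw [← mul_div_assoc, div_eq_iff h1] at h
    exact h
  have hAeq : A = 1 - ∑ j, xstar j ^ 2 := by
    calc A = ∑ j, A * γ j := by rw [← mul_sum, hγsum, mul_one]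
      _ = ∑ j, (xstar j - xstar j ^ 2) := sum_congr rfl fun j _ => by rw [hfix' j]; ring
      _ = 1 - ∑ j, xstar j ^ 2 := by rw [sum_sub_distrib, hsum]
  intro i
  rw [lt_div_iff₀ (by linarith [hγhalf i])]
  have hkey : A * (γ i - xstar i * (1 - γ i))
      = xstar i * (∑ j, xstar j ^ 2 - xstar i ^ 2) := by
    linear_combination (1 + xstar i) * hfix' i - xstar i * hAeq
  have hprod : 0 < A * (γ i - xstar i * (1 - γ i)) := by
    rw [hkey]
    exact mul_pos (hpos i) (sub_pos.mpr (hsq i))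
  linarith [pos_of_mul_pos_right hprod hApos.le]
end

section
/- Given γ_i < 1/3 for all i and β = max_i γ_i/(1 − γ_i), suppose x ∈ int(Δ_n) satisfies x_i ≤ b and F_i(x) ≤ b for all i, where b ≤ β < 1/2. Then the Jacobian J_F(x) of the DeGroot-Friedkin map at x satisfies ‖J_F(x)‖₁ = 2·max_i ∂F_i/∂x_i(x) ≤ 2b < 1, where ‖·‖₁ denotes the maximum absolute column sum matrix norm. -/
/-!
On the set where all coordinates are below `1`, the Jacobian of the DeGroot-Friedkin map `F` is
`∂F_j/∂x_i = F_i (δ_{ij} - F_j) / (1 - x_i)` (`fderiv_DF`). Since `F` takes values in the interior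
of the simplex, the diagonal entries are positive, the off-diagonal ones negative, and every column
sums to zero; hence the absolute column sum is twice the diagonal entry `F_i (1 - F_i) / (1 - x_i)`.
As `t ↦ t (1 - t)` increases on `[0, 1/2]`, the bounds `F_i ≤ b`, `x_i ≤ b` and `b < 1/2` give
`F_i (1 - F_i) / (1 - x_i) ≤ b (1 - b) / (1 - b) = b`. The bound `b < 1/2` holds because
`γ / (1 - γ) < 1/2` whenever `γ < 1/3`.
-/

open Finset

/-- The Jacobian entry `∂F_j/∂x_i = F_i (δ_{ij} - F_j) / (1 - x_i)`. -/
lemma fderiv_DF {n : ℕ} (γ x : Fin n → ℝ) (hx : ∀ i, x i < 1)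
    (hS : ∑ j, γ j / (1 - x j) ≠ 0) (i j : Fin n) :
    fderiv ℝ (fun y : Fin n → ℝ => DF γ y j) x (Pi.single i 1) =
      DF γ x i * ((if j = i then 1 else 0) - DF γ x j) / (1 - x i) := by
  have hg : ∀ k, HasFDerivAt (fun y : Fin n → ℝ => γ k / (1 - y k))
      ((γ k / (1 - x k) ^ 2) • (ContinuousLinearMap.proj k : (Fin n → ℝ) →L[ℝ] ℝ)) x := by
    intro k
    have hk : 1 - x k ≠ 0 := by linarith [hx k]
    have h : HasDerivAt (fun t : ℝ => γ k / (1 - t)) (γ k / (1 - x k) ^ 2) (x k) := by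
      refine ((hasDerivAt_const (x k) (γ k)).fun_div
        ((hasDerivAt_id' (x k)).const_sub 1) hk).congr_deriv ?_
      simp
    have hp : HasFDerivAt (fun y : Fin n → ℝ => y k) (ContinuousLinearMap.proj k) x :=
      hasFDerivAt_apply (𝕜 := ℝ) k x
    exact HasDerivAt.comp_hasFDerivAt (h₂ := fun t : ℝ => γ k / (1 - t)) x h hp
  have hsum := HasFDerivAt.fun_sum (u := Finset.univ) (fun k _ => hg k)
  have hinv := (hasDerivAt_inv hS).comp_hasFDerivAt x hsum
  have hF := hinv.mul (hg j)
  have e : (fun y : Fin n → ℝ => DF γ y j) = ((fun s : ℝ => s⁻¹) ∘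
      fun y : Fin n → ℝ => ∑ k, γ k / (1 - y k)) * fun y => γ j / (1 - y j) := rfl
  have hi : 1 - x i ≠ 0 := by linarith [hx i]
  have hs : ∑ k, γ k / (1 - x k) ^ 2 * (Pi.single i (1 : ℝ) : Fin n → ℝ) k =
      γ i / (1 - x i) ^ 2 := by
    simp [Pi.single_apply]
  rw [e]
  refine (congrArg (fun L => L (Pi.single i 1)) hF.fderiv).trans ?_
  simp only [_root_.add_apply, _root_.smul_apply,
    _root_.sum_apply, ContinuousLinearMap.proj_apply, smul_eq_mul,
    Function.comp_apply, hs, DF]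
  generalize ∑ k, γ k / (1 - x k) = S at hS
  by_cases hji : j = i
  · subst hji
    simp
    field_simp
    ring
  · have hj : 1 - x j ≠ 0 := by linarith [hx j]
    simp [hji]
    field_simp

/-- given γ_i < 1/3 for all i and β = max_i γ_i/(1 − γ_i), suppose
x ∈ int(Δₙ) satisfies x_i ≤ b and F_i(x) ≤ b for all i, where b ≤ β < 1/2. Then
every column absolute sum of the Jacobian J_F(x) equals twice the corresponding
diagonal entry, and ‖J_F(x)‖₁ = 2·max_i ∂F_i/∂x_i(x) ≤ 2b < 1. -/
theorem stmt13 {n : ℕ} (hn : 3 ≤ n) (γ : Fin n → ℝ)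
    (hγpos : ∀ i, 0 < γ i) (hγsum : ∑ i, γ i = 1)
    (hγthird : ∀ i, γ i < 1 / 3)
    (β b : ℝ) (hβ : IsGreatest (Set.range fun i => γ i / (1 - γ i)) β)
    (hb : b ≤ β)
    (x : Fin n → ℝ) (hx : x ∈ intSimplex n)
    (hxb : ∀ i, x i ≤ b) (hFb : ∀ i, DF γ x i ≤ b) :
    (∀ i, ∑ j, |fderiv ℝ (fun y : Fin n → ℝ => DF γ y j) x (Pi.single i 1)| =
        2 * fderiv ℝ (fun y : Fin n → ℝ => DF γ y i) x (Pi.single i 1)) ∧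
    (∀ i, ∑ j, |fderiv ℝ (fun y : Fin n → ℝ => DF γ y j) x (Pi.single i 1)| ≤ 2 * b) ∧
    2 * b < 1 := by
  obtain ⟨hxpos, hxsum⟩ := hx
  have hb2 : 2 * b < 1 := by
    obtain ⟨⟨k, hk⟩, -⟩ := hβ
    have h3 := hγthird k
    have : γ k / (1 - γ k) < 1 / 2 := by
      rw [div_lt_iff₀ (by linarith)]
      linarith
    simp only at hk
    linarith
  have hx1 : ∀ i, x i < 1 := fun i => by linarith [hxb i, hxpos i]
  have hgpos : ∀ i, 0 < γ i / (1 - x i) := fun i => div_pos (hγpos i) (by linarith [hx1 i])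
  have hSpos : 0 < ∑ j, γ j / (1 - x j) :=
    Finset.sum_pos (fun i _ => hgpos i) ⟨⟨0, by omega⟩, Finset.mem_univ _⟩
  have hFpos : ∀ i, 0 < DF γ x i := fun i => mul_pos (inv_pos.mpr hSpos) (hgpos i)
  have hFsum : ∑ i, DF γ x i = 1 := by
    simp only [DF]
    rw [← Finset.mul_sum, inv_mul_cancel₀ hSpos.ne']
  have hJ := fderiv_DF γ x hx1 hSpos.ne'
  have hcol : ∀ i, ∑ j, |fderiv ℝ (fun y : Fin n → ℝ => DF γ y j) x (Pi.single i 1)| =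
      2 * (DF γ x i * (1 - DF γ x i) / (1 - x i)) := by
    intro i
    have hd : 0 < 1 - x i := by linarith [hx1 i]
    have hc : 0 < DF γ x i / (1 - x i) := div_pos (hFpos i) hd
    -- `|δ_{ij} - F_j| = F_j + δ_{ij} (1 - 2 F_i)`, because `0 < F_j` and `F_i ≤ 1`.
    have habs : ∀ j, |fderiv ℝ (fun y : Fin n → ℝ => DF γ y j) x (Pi.single i 1)| =
        DF γ x i / (1 - x i) * (DF γ x j + if j = i then 1 - 2 * DF γ x i else 0) := by
      intro j
      rw [hJ i j, mul_div_right_comm, abs_mul, abs_of_pos hc]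
      congr 1
      by_cases hji : j = i
      · subst hji
        rw [if_pos rfl, if_pos rfl, abs_of_nonneg (by linarith [hFb j])]
        ring
      · rw [if_neg hji, if_neg hji, zero_sub, abs_neg, abs_of_pos (hFpos j), add_zero]
    rw [Finset.sum_congr rfl fun j _ => habs j, ← Finset.mul_sum, Finset.sum_add_distrib, hFsum]
    simp only [Finset.sum_ite_eq', Finset.mem_univ, if_true]
    ring
  refine ⟨fun i => ?_, fun i => ?_, hb2⟩
  · rw [hcol i, hJ i i, if_pos rfl]
  · rw [hcol i]
    have hd : 0 < 1 - x i := by linarith [hx1 i]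
    have h : DF γ x i * (1 - DF γ x i) / (1 - x i) ≤ b := by
      rw [div_le_iff₀ hd]
      have hb0 : 0 < b := (hxpos i).trans_le (hxb i)
      calc DF γ x i * (1 - DF γ x i) ≤ b * (1 - b) := by nlinarith [hFb i, hFpos i]
        _ ≤ b * (1 - x i) := mul_le_mul_of_nonneg_left (by linarith [hxb i]) hb0.le
    linarith
end

section
/- For the DeGroot-Friedkin system with dynamic (arbitrarily switching) topology, initial conditions are forgotten exponentially fast: for every switching signal σ : ℕ → {1,…,P} there exists ρ ∈ (0,1) such that for any two initial conditions x(0), x'(0) ∈ ℝ^n, each satisfying 0 ≤ x_i(0) < 1 for all i (resp. for x'(0)) with at least one strictly positive entry, there exists M > 0 such that the trajectories x(s+1) = F_{σ(s)}(x(s)) and x'(s+1) = F_{σ(s)}(x'(s)) satisfy ‖x(s) − x'(s)‖₁ ≤ M·ρ^s for all s ≥ 0. -/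
/-!
Write `u i = 1 / (1 - x i) ≥ 1` and `S = ∑ j, γ j * u j`. One step of the map reads
`x⁺ i = γ i * u i / S`, `u⁺ i = S / (S - γ i * u i)`.

*Uniform eventual bound.* As `S - γ i * u i ≥ 1 - γ i`, one has
`u⁺ i ≤ 1 + γ i / (1 - γ i) * u i ≤ 1 + q * u i`, where `q < 1` because all weights are bounded by
some `β < 1/2`. Hence `u` is eventually below a constant `K` that does not depend on the initial
condition (`affine_recursion_bound`, `stepU_le`).

*Contraction.* For two trajectories `u`, `v` put `δ i = log (v i) - log (u i)`, and measure the
distance by the oscillation of `δ` (a Hilbert-type projective metric). For `i ≠ j`, with `R` the sum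
of the `γ k * u k` over `k ≠ i, j`,
`log (u⁺ i) - log (u⁺ j) = log (R + γ i * u i) - log (R + γ j * u j)`.
Convexity of `exp` (`log_add_sub_log_add_le`) shows that the oscillation shrinks by a factor at most
the largest value of `a / (R + a)` with `a` one of the `γ i * u i`, `γ i * v i`
(`log_cross_ratio_le`). Since `n ≥ 3`, `R` is at least the smallest weight `c`, so that once
`1 ≤ u, v ≤ K` the factor is at most `1 - c / K` (`osc_step_le`). The 1-norm is finally controlled by
the oscillation because `log (x i)` changes by at most the oscillation and `x i ≤ 1`
(`abs_normalized_sub_le`).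
-/

open Finset

/-- One step of the DeGroot-Friedkin map in the coordinates `u i = 1 / (1 - x i)`. -/
noncomputable def stepU {n : ℕ} (γ u : Fin n → ℝ) : Fin n → ℝ :=
  fun i => (∑ j, γ j * u j) / (∑ j, γ j * u j - γ i * u i)

/-! ### Scalar estimates -/

/-- Convexity of `exp` between `0` and `-p` with weights `R / (R + a)` and `a / (R + a)`. -/
lemma log_add_sub_log_add_le {R a : ℝ} (hR : 0 < R) (ha : 0 < a) (p : ℝ) :
    Real.log (R + a) - Real.log (R + a * Real.exp (-p)) ≤ a / (R + a) * p := by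
  have hRa : 0 < R + a := by positivity
  have hconv := convexOn_exp.2 (Set.mem_univ (0 : ℝ)) (Set.mem_univ (-p))
    (show 0 ≤ R / (R + a) by positivity) (show 0 ≤ a / (R + a) by positivity)
    (by field_simp)
  simp only [smul_eq_mul, mul_zero, zero_add, Real.exp_zero, mul_one] at hconv
  have h2 : R / (R + a) + a / (R + a) * Real.exp (-p)
      = (R + a * Real.exp (-p)) / (R + a) := by field_simp
  rw [h2] at hconv
  have h3 := Real.log_le_log (Real.exp_pos _) hconv
  rw [Real.log_exp, Real.log_div (by positivity) (by positivity)] at h3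
  linarith

/-- The scalar contraction estimate: `R`, `a`, `b` are multiplied by `exp η`, `exp di`, `exp dj`
respectively, and the exponents are within `D` of each other. -/
lemma log_cross_ratio_le {R a b R' a' b' di dj η D lam : ℝ}
    (hR : 0 < R) (ha : 0 < a) (hb : 0 < b)
    (hR' : R' = R * Real.exp η) (ha' : a' = a * Real.exp di) (hb' : b' = b * Real.exp dj)
    (hij : di - dj ≤ D) (hi : di - η ≤ D) (hj : η - dj ≤ D) (hD : 0 ≤ D)
    (hl1 : a' / (R' + a') ≤ lam) (hl2 : b / (R + b) ≤ lam) :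
    (Real.log (R' + a') - Real.log (R + a)) - (Real.log (R' + b') - Real.log (R + b))
      ≤ lam * D := by
  have hR'0 : 0 < R' := by rw [hR']; positivity
  have ha'0 : 0 < a' := by rw [ha']; positivity
  have hb'0 : 0 < b' := by rw [hb']; positivity
  have h1 := log_add_sub_log_add_le hR'0 ha'0 (di - η)
  have h2 := log_add_sub_log_add_le hR hb (η - dj)
  have e1 : R' + a' * Real.exp (-(di - η)) = (R + a) * Real.exp η := by
    have : Real.exp η = Real.exp di * Real.exp (-(di - η)) := by
      rw [← Real.exp_add]; ring_nf
    rw [hR', ha', add_mul]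
    nth_rw 3 [this]
    ring
  have e2 : R' + b' = (R + b * Real.exp (-(η - dj))) * Real.exp η := by
    have : Real.exp dj = Real.exp (-(η - dj)) * Real.exp η := by
      rw [← Real.exp_add]; ring_nf
    rw [hR', hb', this]
    ring
  rw [e1, Real.log_mul (by positivity) (by positivity), Real.log_exp] at h1
  rw [e2, Real.log_mul (by positivity) (by positivity), Real.log_exp]
  have l1 : 0 ≤ a' / (R' + a') := by positivity
  have l2 : 0 ≤ b / (R + b) := by positivity
  have hlam : 0 ≤ lam := l1.trans hl1
  have key : a' / (R' + a') * (di - η) + b / (R + b) * (η - dj) ≤ lam * D := by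
    rcases le_total (di - η) 0 with hp | hp <;> rcases le_total (η - dj) 0 with hq | hq
    · nlinarith [mul_nonneg hlam hD]
    · nlinarith [mul_le_mul hl2 hj hq hlam]
    · nlinarith [mul_le_mul hl1 hi hp hlam]
    · nlinarith [mul_le_mul_of_nonneg_right hl1 hp, mul_le_mul_of_nonneg_right hl2 hq]
  linarith

lemma affine_recursion_bound {q : ℝ} (hq0 : 0 ≤ q) (hq1 : q < 1) {a : ℕ → ℝ}
    (ha : ∀ s, a (s + 1) ≤ 1 + q * a s) (s : ℕ) : a s ≤ 1 / (1 - q) + q ^ s * a 0 := by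
  have h1 : 0 < 1 - q := by linarith
  have h2 : 1 + q * (1 / (1 - q)) = 1 / (1 - q) := by field_simp; ring
  induction s with
  | zero => simp; linarith
  | succ s ih =>
    have := mul_le_mul_of_nonneg_left ih hq0
    rw [pow_succ]
    linarith [ha s]

/-! ### One step in the coordinates `u i = 1 / (1 - x i)` -/

lemma one_sub_le_sum_sub {n : ℕ} {γ u : Fin n → ℝ} (hγ : ∀ i, 0 < γ i) (hs : ∑ i, γ i = 1)
    (hu : ∀ i, 1 ≤ u i) (i : Fin n) : 1 - γ i ≤ ∑ j, γ j * u j - γ i * u i := by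
  rw [← hs, ← Finset.sum_erase_eq_sub (mem_univ i), ← Finset.sum_erase_eq_sub (mem_univ i)]
  exact Finset.sum_le_sum fun j _ => le_mul_of_one_le_right (hγ j).le (hu j)

lemma one_le_stepU {n : ℕ} {γ u : Fin n → ℝ} (hγ : ∀ i, 0 < γ i) (hs : ∑ i, γ i = 1)
    (hh : ∀ i, γ i < 1 / 2) (hu : ∀ i, 1 ≤ u i) (i : Fin n) : 1 ≤ stepU γ u i := by
  have h1 := one_sub_le_sum_sub hγ hs hu i
  have h2 := hh i
  have h3 : 0 < γ i * u i := mul_pos (hγ i) (by linarith [hu i])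
  unfold stepU
  rw [one_le_div (by linarith)]
  linarith

lemma stepU_le {n : ℕ} {γ u : Fin n → ℝ} {β : ℝ} (hγ : ∀ i, 0 < γ i) (hs : ∑ i, γ i = 1)
    (hβ : ∀ i, γ i ≤ β) (hβ2 : β < 1 / 2) (hu : ∀ i, 1 ≤ u i) (i : Fin n) :
    stepU γ u i ≤ 1 + β / (1 - β) * u i := by
  have h1 := one_sub_le_sum_sub hγ hs hu i
  have h2 := hβ i
  have h3 : 0 < γ i * u i := mul_pos (hγ i) (by linarith [hu i])
  have h4 : 0 < ∑ j, γ j * u j - γ i * u i := by linarith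
  have e : stepU γ u i = 1 + γ i * u i / (∑ j, γ j * u j - γ i * u i) := by
    unfold stepU
    field_simp
    ring
  rw [e, div_mul_eq_mul_div]
  have h5 : γ i * u i ≤ β * u i := mul_le_mul_of_nonneg_right h2 (by linarith [hu i])
  have h6 : γ i * u i / (∑ j, γ j * u j - γ i * u i) ≤ β * u i / (1 - β) :=
    div_le_div₀ (by linarith) h5 (by linarith) (by linarith)
  linarith

/-- The oscillation of `log v - log u` contracts by the factor `1 - c / K`, where `c` bounds the
weights below and `K` bounds `u`, `v` above. -/
lemma osc_step_le {n : ℕ} (hn : 3 ≤ n) {γ u v : Fin n → ℝ} {c K D : ℝ} (hc : 0 < c)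
    (hγ : ∀ i, c ≤ γ i) (hs : ∑ i, γ i = 1)
    (hu : ∀ i, 1 ≤ u i) (hv : ∀ i, 1 ≤ v i) (huK : ∀ i, u i ≤ K) (hvK : ∀ i, v i ≤ K)
    (hD : ∀ i j, (Real.log (v i) - Real.log (u i)) - (Real.log (v j) - Real.log (u j)) ≤ D)
    (i j : Fin n) :
    (Real.log (stepU γ v i) - Real.log (stepU γ u i))
      - (Real.log (stepU γ v j) - Real.log (stepU γ u j)) ≤ (1 - c / K) * D := by
  have hD0 : 0 ≤ D := by simpa using hD i i
  have hK1 : 1 ≤ K := (hu i).trans (huK i)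
  have hγ0 : ∀ k, 0 < γ k := fun k => hc.trans_le (hγ k)
  have hc1 : c ≤ 1 := by
    rw [← hs]
    exact (hγ i).trans (Finset.single_le_sum (fun k _ => (hγ0 k).le) (mem_univ i))
  have hlam : 0 ≤ 1 - c / K := by
    have : c / K ≤ 1 := by rw [div_le_one (by linarith)]; linarith
    linarith
  rcases eq_or_ne i j with rfl | hij
  · simpa using mul_nonneg hlam hD0
  set T := ((univ : Finset (Fin n)).erase i).erase j with hT
  have hji : j ∈ (univ : Finset (Fin n)).erase i := by simp [hij.symm]
  have split : ∀ w : Fin n → ℝ,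
      ∑ k, γ k * w k = ∑ k ∈ T, γ k * w k + γ j * w j + γ i * w i := by
    intro w
    rw [Finset.sum_erase_add _ _ hji, Finset.sum_erase_add _ _ (mem_univ i)]
  -- this is where `3 ≤ n` enters: some index differs from both `i` and `j`
  have hTne : T.Nonempty := by
    rw [← Finset.card_pos, hT, Finset.card_erase_of_mem hji, Finset.card_erase_of_mem (mem_univ i),
      Finset.card_univ, Fintype.card_fin]
    omega
  have hRc : ∀ w : Fin n → ℝ, (∀ k, 1 ≤ w k) → c ≤ ∑ k ∈ T, γ k * w k := by
    intro w hw
    obtain ⟨k, hk⟩ := hTne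
    refine ((hγ k).trans (le_mul_of_one_le_right (hγ0 k).le (hw k))).trans ?_
    exact Finset.single_le_sum (f := fun k => γ k * w k)
      (fun k _ => mul_nonneg (hγ0 k).le (by linarith [hw k])) hk
  have hSK : ∀ w : Fin n → ℝ, (∀ k, w k ≤ K) → ∑ k, γ k * w k ≤ K := by
    intro w hw
    calc ∑ k, γ k * w k ≤ ∑ k, γ k * K :=
          Finset.sum_le_sum fun k _ => mul_le_mul_of_nonneg_left (hw k) (hγ0 k).le
      _ = K := by rw [← Finset.sum_mul, hs, one_mul]
  have hfac : ∀ R a : ℝ, c ≤ R → 0 < a → R + a ≤ K → a / (R + a) ≤ 1 - c / K := by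
    intro R a h1 h2 h3
    have e : a / (R + a) = 1 - R / (R + a) := by
      have : R + a ≠ 0 := by linarith
      field_simp
      ring
    have : c / K ≤ R / (R + a) := div_le_div₀ (by linarith) h1 (by linarith) h3
    linarith
  have hup : ∀ k, 0 < γ k * u k := fun k => mul_pos (hγ0 k) (by linarith [hu k])
  have hvp : ∀ k, 0 < γ k * v k := fun k => mul_pos (hγ0 k) (by linarith [hv k])
  have hve : ∀ k, γ k * v k = γ k * u k * Real.exp (Real.log (v k) - Real.log (u k)) := by
    intro k
    have h1 : 0 < u k := by linarith [hu k]
    have h2 : 0 < v k := by linarith [hv k]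
    rw [Real.exp_sub, Real.exp_log h1, Real.exp_log h2]
    field_simp
  have hR := hc.trans_le (hRc u hu)
  have hR' := hc.trans_le (hRc v hv)
  set R := ∑ k ∈ T, γ k * u k with hRdef
  set R' := ∑ k ∈ T, γ k * v k with hRdef'
  have hlow : R * Real.exp (Real.log (v i) - Real.log (u i) - D) ≤ R' := by
    rw [hRdef, Finset.sum_mul]
    refine Finset.sum_le_sum fun k _ => ?_
    rw [hve k]
    refine mul_le_mul_of_nonneg_left (Real.exp_le_exp.2 ?_) (hup k).le
    linarith [hD i k]
  have hupp : R' ≤ R * Real.exp (Real.log (v j) - Real.log (u j) + D) := by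
    rw [hRdef, Finset.sum_mul]
    refine Finset.sum_le_sum fun k _ => ?_
    rw [hve k]
    refine mul_le_mul_of_nonneg_left (Real.exp_le_exp.2 ?_) (hup k).le
    linarith [hD k j]
  have hη : R' = R * Real.exp (Real.log R' - Real.log R) := by
    rw [Real.exp_sub, Real.exp_log hR, Real.exp_log hR']
    field_simp
  have hlow' := Real.log_le_log (by positivity) hlow
  have hupp' := Real.log_le_log hR' hupp
  rw [Real.log_mul hR.ne' (Real.exp_pos _).ne', Real.log_exp] at hlow' hupp'
  have hSu := hSK u huK
  have hSv := hSK v hvK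
  rw [split] at hSu hSv
  have main := log_cross_ratio_le hR (hup i) (hup j) hη (hve i) (hve j) (hD i j)
    (by linarith) (by linarith) hD0
    (hfac _ _ (hRc v hv) (hvp i) (by linarith [hvp j]))
    (hfac _ _ (hRc u hu) (hup j) (by linarith [hup i]))
  have hi := hup i
  have hj := hup j
  have hi' := hvp i
  have hj' := hvp j
  have ei : ∀ w : Fin n → ℝ, stepU γ w i = (∑ k, γ k * w k) / (∑ k ∈ T, γ k * w k + γ j * w j) := by
    intro w
    unfold stepU
    rw [split w]
    ring_nf
  have ej : ∀ w : Fin n → ℝ, stepU γ w j = (∑ k, γ k * w k) / (∑ k ∈ T, γ k * w k + γ i * w i) := by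
    intro w
    unfold stepU
    rw [split w]
    ring_nf
  rw [ei, ei, ej, ej, ← hRdef, ← hRdef']
  have hSu0 : 0 < ∑ k, γ k * u k := by rw [split]; linarith
  have hSv0 : 0 < ∑ k, γ k * v k := by rw [split]; linarith
  rw [Real.log_div hSv0.ne' (by linarith), Real.log_div hSu0.ne' (by linarith),
    Real.log_div hSv0.ne' (by linarith), Real.log_div hSu0.ne' (by linarith)]
  linarith

/-! ### From the oscillation to the entries of `x` -/

/-- On `(0, 1]` the logarithm expands distances. -/
lemma sub_le_log_sub_log {a b : ℝ} (ha : 0 < a) (hb : 0 < b) (ha1 : a ≤ 1) {D : ℝ} (hD : 0 ≤ D)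
    (h : Real.log a - Real.log b ≤ D) : a - b ≤ D := by
  rcases le_total a b with hab | hab
  · linarith
  have h1 := Real.log_le_sub_one_of_pos (div_pos hb ha)
  rw [Real.log_div hb.ne' ha.ne'] at h1
  have h2 : a - b ≤ 1 - b / a := by
    have : 1 - b / a = (a - b) / a := by field_simp
    rw [this, le_div_iff₀ ha]
    nlinarith
  linarith

lemma normalized_sub_le {n : ℕ} {γ u v : Fin n → ℝ} {D : ℝ}
    (hγ : ∀ i, 0 < γ i) (hu : ∀ i, 0 < u i) (hv : ∀ i, 0 < v i)
    (hD : ∀ i j, (Real.log (v i) - Real.log (u i)) - (Real.log (v j) - Real.log (u j)) ≤ D)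
    (i : Fin n) :
    γ i * v i / (∑ j, γ j * v j) - γ i * u i / (∑ j, γ j * u j) ≤ D := by
  have hD0 : 0 ≤ D := by simpa using hD i i
  have hup : ∀ k, 0 < γ k * u k := fun k => mul_pos (hγ k) (hu k)
  have hvp : ∀ k, 0 < γ k * v k := fun k => mul_pos (hγ k) (hv k)
  have hSu : 0 < ∑ j, γ j * u j := Finset.sum_pos (fun k _ => hup k) ⟨i, mem_univ i⟩
  have hSv : 0 < ∑ j, γ j * v j := Finset.sum_pos (fun k _ => hvp k) ⟨i, mem_univ i⟩
  refine sub_le_log_sub_log (div_pos (hvp i) hSv) (div_pos (hup i) hSu) ?_ hD0 ?_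
  · rw [div_le_one hSv]
    exact Finset.single_le_sum (f := fun k => γ k * v k) (fun k _ => (hvp k).le) (mem_univ i)
  have hlow : (∑ j, γ j * u j) * Real.exp (Real.log (v i) - Real.log (u i) - D)
      ≤ ∑ j, γ j * v j := by
    rw [Finset.sum_mul]
    refine Finset.sum_le_sum fun k _ => ?_
    have hve : γ k * v k = γ k * u k * Real.exp (Real.log (v k) - Real.log (u k)) := by
      rw [Real.exp_sub, Real.exp_log (hu k), Real.exp_log (hv k)]
      have := (hu k).ne'
      field_simp
    rw [hve]
    refine mul_le_mul_of_nonneg_left (Real.exp_le_exp.2 ?_) (hup k).le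
    linarith [hD i k]
  have hl := Real.log_le_log (by positivity) hlow
  rw [Real.log_mul hSu.ne' (Real.exp_pos _).ne', Real.log_exp] at hl
  rw [Real.log_div (hvp i).ne' hSv.ne', Real.log_div (hup i).ne' hSu.ne',
    Real.log_mul (hγ i).ne' (hv i).ne', Real.log_mul (hγ i).ne' (hu i).ne']
  linarith

lemma abs_normalized_sub_le {n : ℕ} {γ u v : Fin n → ℝ} {D : ℝ}
    (hγ : ∀ i, 0 < γ i) (hu : ∀ i, 0 < u i) (hv : ∀ i, 0 < v i)
    (hD : ∀ i j, (Real.log (v i) - Real.log (u i)) - (Real.log (v j) - Real.log (u j)) ≤ D)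
    (i : Fin n) :
    |γ i * u i / (∑ j, γ j * u j) - γ i * v i / (∑ j, γ j * v j)| ≤ D := by
  rw [abs_le]
  constructor
  · linarith [normalized_sub_le hγ hu hv hD i]
  · exact normalized_sub_le hγ hv hu (fun k l => by linarith [hD l k]) i

/-! ### Trajectories -/

lemma DF_eq {n : ℕ} (γ x : Fin n → ℝ) (i : Fin n) :
    DF γ x i = γ i * (1 - x i)⁻¹ / ∑ j, γ j * (1 - x j)⁻¹ := by
  simp only [DF, div_eq_mul_inv]
  ring

/-- The map `DF` is `stepU` in the coordinates `u i = 1 / (1 - x i)`. -/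
lemma inv_one_sub_DF {n : ℕ} {γ x : Fin n → ℝ} (hγ : ∀ i, 0 < γ i) (hx : ∀ i, x i < 1)
    (i : Fin n) : (1 - DF γ x i)⁻¹ = stepU γ (fun j => (1 - x j)⁻¹) i := by
  have hS : 0 < ∑ j, γ j * (1 - x j)⁻¹ := Finset.sum_pos
    (fun k _ => mul_pos (hγ k) (inv_pos.2 (by linarith [hx k]))) ⟨i, mem_univ i⟩
  rw [DF_eq, one_sub_div hS.ne', inv_div]
  rfl

/-- A trajectory stays in `[0, 1)`, its `u`-coordinates follow `stepU`, and they are eventually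
bounded by a constant depending only on the bound `β` for the weights. -/
lemma trajectory_facts {n : ℕ} {γ : ℕ → Fin n → ℝ} {β : ℝ}
    (hγ : ∀ s i, 0 < γ s i) (hs : ∀ s, ∑ i, γ s i = 1) (hβ0 : 0 ≤ β) (hβ2 : β < 1 / 2)
    (hβ : ∀ s i, γ s i ≤ β) {x : ℕ → Fin n → ℝ} (h0 : ∀ i, 0 ≤ x 0 i) (h1 : ∀ i, x 0 i < 1)
    (hx : ∀ s, x (s + 1) = DF (γ s) (x s)) :
    (∀ s i, 0 ≤ x s i ∧ x s i < 1) ∧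
    (∀ s, (fun i => (1 - x (s + 1) i)⁻¹) = stepU (γ s) (fun i => (1 - x s i)⁻¹)) ∧
    ∃ N, ∀ s, N ≤ s → ∀ i, (1 - x s i)⁻¹ ≤ 1 / (1 - β / (1 - β)) + 1 := by
  have hone : ∀ s, (∀ i, 0 ≤ x s i ∧ x s i < 1) → ∀ i, 1 ≤ (1 - x s i)⁻¹ := by
    intro s h i
    exact (one_le_inv₀ (by linarith [(h i).2])).2 (by linarith [(h i).1])
  have hall : ∀ s i, 0 ≤ x s i ∧ x s i < 1 := by
    intro s
    induction s with
    | zero => exact fun i => ⟨h0 i, h1 i⟩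
    | succ s ih =>
      intro i
      have hu := hone s ih
      have hd := one_sub_le_sum_sub (hγ s) (hs s) hu i
      have hp : 0 < γ s i * (1 - x s i)⁻¹ := mul_pos (hγ s i) (by linarith [hu i])
      have := hβ s i
      rw [hx s, DF_eq]
      constructor
      · exact div_nonneg hp.le (by linarith)
      · rw [div_lt_one (by linarith)]
        linarith
  have hstep : ∀ s, (fun i => (1 - x (s + 1) i)⁻¹) = stepU (γ s) (fun i => (1 - x s i)⁻¹) := by
    intro s
    funext i
    rw [hx s]
    exact inv_one_sub_DF (hγ s) (fun k => (hall s k).2) i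
  refine ⟨hall, hstep, ?_⟩
  have hq0 : 0 ≤ β / (1 - β) := div_nonneg hβ0 (by linarith)
  have hq1 : β / (1 - β) < 1 := by rw [div_lt_one (by linarith)]; linarith
  have hbd : ∀ i s, (1 - x s i)⁻¹ ≤ 1 / (1 - β / (1 - β)) + (β / (1 - β)) ^ s * (1 - x 0 i)⁻¹ := by
    intro i s
    refine affine_recursion_bound hq0 hq1 (a := fun s => (1 - x s i)⁻¹) (fun s => ?_) s
    have := stepU_le (hγ s) (hs s) (hβ s) hβ2 (hone s (hall s)) i
    rw [← hstep s] at this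
    exact this
  have hev : ∀ i, ∀ᶠ s in Filter.atTop, (β / (1 - β)) ^ s * (1 - x 0 i)⁻¹ ≤ 1 := by
    intro i
    have ht : Filter.Tendsto (fun s : ℕ => (β / (1 - β)) ^ s * (1 - x 0 i)⁻¹) Filter.atTop
        (nhds (0 * (1 - x 0 i)⁻¹)) :=
      (tendsto_pow_atTop_nhds_zero_of_lt_one hq0 hq1).mul_const _
    rw [zero_mul] at ht
    exact ht.eventually_le_const one_pos
  obtain ⟨N, hN⟩ := Filter.eventually_atTop.1 (Filter.eventually_all.2 hev)
  exact ⟨N, fun s hs i => (hbd i s).trans (by linarith [hN s hs i])⟩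

/-! ### Exponential forgetting -/

/-- for the switching DeGroot-Friedkin system, initial conditions
are forgotten exponentially fast: for every switching signal σ there is
ρ ∈ (0,1) such that any two trajectories x(s+1) = F_{σ(s)}(x(s)),
x'(s+1) = F_{σ(s)}(x'(s)) from initial conditions with entries in [0,1) and at
least one positive entry satisfy ‖x(s) − x'(s)‖₁ ≤ M·ρ^s for some M > 0. -/
theorem stmt14 {n P : ℕ} (hn : 3 ≤ n) (hP : 1 ≤ P)
    (γ : Fin P → Fin n → ℝ)
    (hγpos : ∀ p i, 0 < γ p i) (hγsum : ∀ p, ∑ i, γ p i = 1)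
    (hγhalf : ∀ p i, γ p i < 1 / 2) :
    ∀ σ : ℕ → Fin P, ∃ ρ : ℝ, 0 < ρ ∧ ρ < 1 ∧
      ∀ x x' : ℕ → Fin n → ℝ,
        (∀ i, 0 ≤ x 0 i) → (∀ i, x 0 i < 1) → (∃ j, 0 < x 0 j) →
        (∀ i, 0 ≤ x' 0 i) → (∀ i, x' 0 i < 1) → (∃ j, 0 < x' 0 j) →
        (∀ s, x (s + 1) = DF (γ (σ s)) (x s)) →
        (∀ s, x' (s + 1) = DF (γ (σ s)) (x' s)) →
        ∃ M > (0 : ℝ), ∀ s : ℕ, norm1 (x s - x' s) ≤ M * ρ ^ s := by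
  intro σ
  have : Nonempty (Fin P × Fin n) := ⟨(⟨0, by omega⟩, ⟨0, by omega⟩)⟩
  obtain ⟨pmax, hmax⟩ := Finite.exists_max (fun p : Fin P × Fin n => γ p.1 p.2)
  obtain ⟨pmin, hmin⟩ := Finite.exists_min (fun p : Fin P × Fin n => γ p.1 p.2)
  set β := γ pmax.1 pmax.2 with hβdef
  set c := γ pmin.1 pmin.2 with hcdef
  have hβ : ∀ p i, γ p i ≤ β := fun p i => hmax (p, i)
  have hc : ∀ p i, c ≤ γ p i := fun p i => hmin (p, i)
  have hβ2 : β < 1 / 2 := hγhalf _ _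
  have hβ0 : 0 < β := hγpos _ _
  have hc0 : 0 < c := hγpos _ _
  have hcβ : c ≤ β := hc _ _
  set K := 1 / (1 - β / (1 - β)) + 1 with hK
  have hK1 : 1 < K := by
    have hq1 : β / (1 - β) < 1 := by rw [div_lt_one (by linarith)]; linarith
    have : 0 < 1 / (1 - β / (1 - β)) := one_div_pos.2 (by linarith)
    linarith
  have hcK0 : 0 < c / K := div_pos hc0 (by linarith)
  have hcK1 : c / K < 1 := by rw [div_lt_one (by linarith)]; linarith
  set ρ := 1 - c / K with hρ
  have hρ0 : 0 < ρ := by linarith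
  have hρ1 : ρ < 1 := by linarith
  refine ⟨ρ, hρ0, hρ1, ?_⟩
  intro x x' hx0 hx1 _ hx0' hx1' _ hx hx'
  obtain ⟨hI, hU, N₁, hN₁⟩ := trajectory_facts (γ := fun s => γ (σ s)) (fun s => hγpos (σ s))
    (fun s => hγsum (σ s)) hβ0.le hβ2 (fun s => hβ (σ s)) hx0 hx1 hx
  obtain ⟨hI', hU', N₂, hN₂⟩ := trajectory_facts (γ := fun s => γ (σ s)) (fun s => hγpos (σ s))
    (fun s => hγsum (σ s)) hβ0.le hβ2 (fun s => hβ (σ s)) hx0' hx1' hx'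
  rw [← hK] at hN₁ hN₂
  have hone : ∀ s i, 1 ≤ (1 - x s i)⁻¹ := fun s i =>
    (one_le_inv₀ (by linarith [(hI s i).2])).2 (by linarith [(hI s i).1])
  have hone' : ∀ s i, 1 ≤ (1 - x' s i)⁻¹ := fun s i =>
    (one_le_inv₀ (by linarith [(hI' s i).2])).2 (by linarith [(hI' s i).1])
  set N := max N₁ N₂ with hN
  let d : ℕ → Fin n → ℝ := fun s i => Real.log (1 - x' s i)⁻¹ - Real.log (1 - x s i)⁻¹
  have : Nonempty (Fin n × Fin n) := ⟨(⟨0, by omega⟩, ⟨0, by omega⟩)⟩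
  obtain ⟨pd, hpd⟩ := Finite.exists_max (fun p : Fin n × Fin n => d N p.1 - d N p.2)
  set C := d N pd.1 - d N pd.2 with hC
  have hCN : ∀ i j, d N i - d N j ≤ C := fun i j => hpd (i, j)
  have hC0 : 0 ≤ C := by simpa using hCN pd.1 pd.1
  have hosc : ∀ t i j, d (N + t) i - d (N + t) j ≤ ρ ^ t * C := by
    intro t
    induction t with
    | zero => simpa using hCN
    | succ t ih =>
      intro i j
      have := osc_step_le hn hc0 (hc (σ (N + t))) (hγsum _) (hone (N + t)) (hone' (N + t))
        (hN₁ _ (by omega)) (hN₂ _ (by omega)) ih i j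
      rw [← hU, ← hU'] at this
      rw [pow_succ', mul_assoc]
      exact this
  have hterm : ∀ t i, |x (N + t + 1) i - x' (N + t + 1) i| ≤ ρ ^ t * C := by
    intro t i
    rw [hx, hx', DF_eq, DF_eq]
    exact abs_normalized_sub_le (u := fun i => (1 - x (N + t) i)⁻¹)
      (v := fun i => (1 - x' (N + t) i)⁻¹) (hγpos _) (fun i => by linarith [hone (N + t) i])
      (fun i => by linarith [hone' (N + t) i]) (hosc t) i
  have hn0 : (0 : ℝ) < n := by exact_mod_cast (by omega : 0 < n)
  have hsum : ∀ s B, (∀ i, |x s i - x' s i| ≤ B) → norm1 (x s - x' s) ≤ n * B := by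
    intro s B h
    calc norm1 (x s - x' s) ≤ ∑ _i : Fin n, B := Finset.sum_le_sum fun i _ => h i
      _ = n * B := by simp
  have hρN : 0 < ρ ^ (N + 1) := pow_pos hρ0 _
  refine ⟨n * (1 + C) / ρ ^ (N + 1), by positivity, fun s => ?_⟩
  rcases Nat.lt_or_ge s (N + 1) with hs | hs
  · refine (hsum s 1 fun i => ?_).trans ?_
    · rw [abs_le]
      constructor <;> linarith [(hI s i).1, (hI s i).2, (hI' s i).1, (hI' s i).2]
    · have h1 : ρ ^ (N + 1) ≤ ρ ^ s := pow_le_pow_of_le_one hρ0.le hρ1.le hs.le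
      rw [div_mul_eq_mul_div, le_div_iff₀ hρN]
      have h2 : (n : ℝ) * 1 ≤ n * (1 + C) := by gcongr; linarith
      exact mul_le_mul h2 h1 hρN.le (by positivity)
  · obtain ⟨t, rfl⟩ := Nat.exists_eq_add_of_le hs
    have e : N + 1 + t = N + t + 1 := by ring
    have h1 : norm1 (x (N + 1 + t) - x' (N + 1 + t)) ≤ n * (ρ ^ t * C) := by
      rw [e]
      exact hsum _ _ (hterm t)
    have h2 : n * (1 + C) / ρ ^ (N + 1) * ρ ^ (N + 1 + t) = n * (ρ ^ t * (1 + C)) := by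
      rw [pow_add ρ (N + 1) t, ← mul_assoc, div_mul_cancel₀ _ hρN.ne']
      ring
    rw [h2]
    refine h1.trans ?_
    gcongr
    linarith
end

section
/- For each index j define γ̄_j = max_{p ∈ {1,…,P}} γ_{p,j} and r̄_j = (1 − 2γ̄_j)/(1 − γ̄_j) (positive since γ̄_j < 1/2). Then for every p ∈ {1,…,P}, every r with 0 < r ≤ r̄_j, and every x ∈ int(Δ_n): if x_j ≤ 1 − r, then F_{p,j}(x) < 1 − r, where F_{p,j}(x) is the j-th component of F_p(x). -/
/-!
Write `g = γ_{p,j}`, `A = g / (1 - x_j)` and `B = ∑_{i ≠ j} γ_{p,i} / (1 - x_i)`, so that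
`F_{p,j}(x) = A / (A + B)`; the claim `F_{p,j}(x) < 1 - r` is equivalent to `r A < (1 - r) B`.
Since `r ≤ 1 - x_j`, the left side is at most `g`. Since every `x_i` is positive, `B > 1 - g`.
Finally `r ≤ r̄_j` says `(2 - r) γ̄_j ≤ 1 - r`, whence `(2 - r) g ≤ 1 - r`, that is
`g ≤ (1 - r) (1 - g)`, which joins the two bounds.
-/

open Finset

/-- for an index j, with γ̄_j = max_p γ_{p,j} and
r̄_j = (1 − 2γ̄_j)/(1 − γ̄_j) > 0, for every p, every 0 < r ≤ r̄_j and every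
x ∈ int(Δₙ): x_j ≤ 1 − r implies F_{p,j}(x) < 1 − r. -/
theorem stmt16 {n P : ℕ} (hn : 3 ≤ n) (hP : 1 ≤ P)
    (γ : Fin P → Fin n → ℝ)
    (hγpos : ∀ p i, 0 < γ p i) (hγsum : ∀ p, ∑ i, γ p i = 1)
    (hγhalf : ∀ p i, γ p i < 1 / 2)
    (j : Fin n) (γbar : ℝ)
    (hγbar : IsGreatest (Set.range fun p => γ p j) γbar) :
    0 < (1 - 2 * γbar) / (1 - γbar) ∧
    ∀ p : Fin P, ∀ r : ℝ, 0 < r → r ≤ (1 - 2 * γbar) / (1 - γbar) →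
      ∀ x ∈ intSimplex n, x j ≤ 1 - r → DF (γ p) x j < 1 - r := by
  have hbar_half : γbar < 1 / 2 := by
    obtain ⟨p, hp⟩ := hγbar.1
    exact hp ▸ hγhalf p j
  refine ⟨div_pos (by linarith) (by linarith), ?_⟩
  intro p r hr hrbar x hx hxj
  obtain ⟨hxpos, hxsum⟩ := hx
  have hg_le : γ p j ≤ γbar := hγbar.2 ⟨p, rfl⟩
  have hg_pos := hγpos p j
  rw [le_div_iff₀ (by linarith)] at hrbar
  have hr_lt : r < 1 := by linarith [hxpos j]
  have hsplit (f : Fin n → ℝ) : f j + ∑ i ∈ univ.erase j, f i = ∑ i, f i :=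
    add_sum_erase _ _ (mem_univ j)
  have hne : (univ.erase j).Nonempty := by
    rw [← card_pos, card_erase_of_mem (mem_univ j), card_univ, Fintype.card_fin]
    omega
  -- The other coordinates are below `1`, because `x_j > 0` and the coordinates sum to `1`.
  have hx_lt : ∀ i ∈ univ.erase j, x i < 1 := by
    intro i hi
    have hle : x i ≤ ∑ k ∈ univ.erase j, x k :=
      single_le_sum (fun k _ => (hxpos k).le) hi
    linarith [hsplit x, hxpos j]
  have hB : 1 - γ p j < ∑ i ∈ univ.erase j, γ p i / (1 - x i) := by
    have hlt : ∑ i ∈ univ.erase j, γ p i < ∑ i ∈ univ.erase j, γ p i / (1 - x i) := by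
      refine sum_lt_sum_of_nonempty hne fun i hi => ?_
      rw [lt_div_iff₀ (by linarith [hx_lt i hi])]
      nlinarith [mul_pos (hγpos p i) (hxpos i)]
    linarith [hsplit (γ p), hγsum p]
  have hApos : 0 < γ p j / (1 - x j) := div_pos hg_pos (by linarith)
  have hA : r * (γ p j / (1 - x j)) ≤ γ p j := by
    rw [mul_div_assoc', div_le_iff₀ (by linarith)]
    nlinarith
  have hg : γ p j ≤ (1 - r) * (1 - γ p j) := by nlinarith
  have hmul := mul_lt_mul_of_pos_left hB (sub_pos.2 hr_lt)
  have hhalf := hγhalf p j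
  simp only [DF]
  rw [← hsplit fun i => γ p i / (1 - x i), inv_mul_eq_div, div_lt_iff₀ (by linarith)]
  linarith
end

section
/- For each index i define γ̄_i = max_{p ∈ {1,…,P}} γ_{p,i}. Then for any switching signal σ : ℕ → {1,…,P} and any initial condition x(0) ∈ ℝ^n with 0 ≤ x_i(0) < 1 for all i and x_j(0) > 0 for at least one j, the trajectory x(s+1) = F_{σ(s)}(x(s)) satisfies limsup_{s→∞} x_i(s) ≤ γ̄_i/(1 − γ̄_i) for every index i. -/
/-!
Fix an agent `i` and put `g = γbar i < 1/2`, `c = g / (1 - g) < 1`. Bounding `1 / (1 - x j) ≥ 1` for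
all `j ≠ i` in the normalising sum gives the scalar comparison `F(x) i ≤ h (x i)` with
`h y = g / (1 - (1 - g) y)` (`DF_le`). The fixed points of `h` are `c` and `1`, and
`h y - c = (g / (1 - (1 - g) y)) (y - c)`. If `M = max (x 0 i) c`, then `M < 1` and the factor is at
most `h M ≤ M` on `y ≤ M`, so `h` maps `(-∞, M]` into itself and contracts towards `c` at rate `M`
(`scalar_contraction`). Hence `x s i ≤ c + M ^ s`, and the limsup is at most `c`.
-/

open Finset

lemma DF_nonneg {n : ℕ} {γ x : Fin n → ℝ} (hγ : ∀ i, 0 < γ i) (hx1 : ∀ i, x i < 1) (i : Fin n) :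
    0 ≤ DF γ x i := by
  have h : ∀ j, 0 ≤ γ j / (1 - x j) := fun j =>
    div_nonneg (hγ j).le (sub_nonneg.2 (hx1 j).le)
  exact mul_nonneg (inv_nonneg.2 (Finset.sum_nonneg fun j _ => h j)) (h i)

/-- Scalar comparison for one coordinate, obtained by replacing `1 / (1 - x j)` by `1` for
every `j ≠ i`, and then `γ i` by an upper bound `g`. -/
lemma DF_le {n : ℕ} {γ x : Fin n → ℝ} (hγ : ∀ i, 0 < γ i) (hsum : ∑ i, γ i = 1)
    (hx0 : ∀ i, 0 ≤ x i) (hx1 : ∀ i, x i < 1) {i : Fin n} {g : ℝ} (hg : γ i ≤ g) (hg1 : g < 1) :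
    DF γ x i ≤ g / (1 - (1 - g) * x i) := by
  have hu : 0 < 1 - x i := sub_pos.2 (hx1 i)
  have hx := hx0 i
  have hγi := hγ i
  have hle : γ i / (1 - x i) + (1 - γ i) ≤ ∑ j, γ j / (1 - x j) := by
    have hrest : 1 - γ i = ∑ j ∈ Finset.univ.erase i, γ j := by
      linarith [Finset.add_sum_erase Finset.univ γ (Finset.mem_univ i)]
    rw [hrest, ← Finset.add_sum_erase _ (fun j => γ j / (1 - x j)) (Finset.mem_univ i)]
    gcongr with j _
    rw [le_div_iff₀ (sub_pos.2 (hx1 j))]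
    nlinarith [hγ j, hx0 j]
  have hq : 0 < γ i / (1 - x i) := div_pos hγi hu
  have hpos : 0 < γ i / (1 - x i) + (1 - γ i) := by linarith
  have hD : 0 < 1 - (1 - g) * x i := by nlinarith
  have hD' : 0 < 1 - (1 - γ i) * x i := by nlinarith
  calc DF γ x i ≤ (γ i / (1 - x i) + (1 - γ i))⁻¹ * (γ i / (1 - x i)) := by
        unfold DF
        gcongr
    _ = γ i / (1 - (1 - γ i) * x i) := by
        have : γ i / (1 - x i) + (1 - γ i) = (1 - (1 - γ i) * x i) / (1 - x i) := by
          field_simp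
          ring
        rw [this, inv_div]
        field_simp
    _ ≤ g / (1 - (1 - g) * x i) := by
        rw [div_le_div_iff₀ hD' hD]
        nlinarith

/-- The map `y ↦ g / (1 - (1 - g) y)` preserves `(-∞, M]` and contracts towards its fixed point
`g / (1 - g)` at rate `M`, for every `M` between that fixed point and the repelling one, `1`. -/
lemma scalar_contraction {g M y e : ℝ} (hg : 0 < g) (hg2 : g < 1 / 2) (hc : g / (1 - g) ≤ M)
    (hM : M < 1) (hyM : y ≤ M) (he : 0 ≤ e) (hye : y ≤ g / (1 - g) + e) :
    g / (1 - (1 - g) * y) ≤ M ∧ g / (1 - (1 - g) * y) ≤ g / (1 - g) + M * e := by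
  have hg' : 0 < 1 - g := by linarith
  have hcpos : 0 < g / (1 - g) := div_pos hg hg'
  have hD : 0 < 1 - (1 - g) * y := by nlinarith
  have hcM : g ≤ M * (1 - g) := (div_le_iff₀ hg').1 hc
  have hr : g / (1 - (1 - g) * y) ≤ M := by
    rw [div_le_iff₀ hD]
    -- `M - (1 - g) M² - g = (M (1 - g) - g) (1 - M)`
    nlinarith [mul_nonneg (sub_nonneg.2 hcM) (sub_nonneg.2 hM.le),
      mul_nonneg (mul_nonneg (hcpos.le.trans hc) hg'.le) (sub_nonneg.2 hyM)]
  refine ⟨hr, ?_⟩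
  have key : g / (1 - (1 - g) * y) - g / (1 - g)
      = g / (1 - (1 - g) * y) * (y - g / (1 - g)) := by
    field_simp
    ring
  have h0 : 0 ≤ g / (1 - (1 - g) * y) := (div_pos hg hD).le
  have h1 : g / (1 - (1 - g) * y) * (y - g / (1 - g)) ≤ g / (1 - (1 - g) * y) * e :=
    mul_le_mul_of_nonneg_left (by linarith) h0
  have h2 := mul_le_mul_of_nonneg_right hr he
  linarith

/-- with γ̄_i = max_p γ_{p,i}, for any switching signal σ and any
initial condition with entries in [0,1) and at least one positive entry, the
trajectory x(s+1) = F_{σ(s)}(x(s)) satisfies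
limsup_{s→∞} x_i(s) ≤ γ̄_i/(1 − γ̄_i) for every i. -/
theorem stmt17 {n P : ℕ} (hn : 3 ≤ n) (hP : 1 ≤ P)
    (γ : Fin P → Fin n → ℝ)
    (hγpos : ∀ p i, 0 < γ p i) (hγsum : ∀ p, ∑ i, γ p i = 1)
    (hγhalf : ∀ p i, γ p i < 1 / 2)
    (γbar : Fin n → ℝ)
    (hγbar : ∀ i, IsGreatest (Set.range fun p => γ p i) (γbar i)) :
    ∀ σ : ℕ → Fin P, ∀ x : ℕ → Fin n → ℝ,
      (∀ i, 0 ≤ x 0 i) → (∀ i, x 0 i < 1) → (∃ j, 0 < x 0 j) →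
      (∀ s, x (s + 1) = DF (γ (σ s)) (x s)) →
      ∀ i, Filter.limsup (fun s => x s i) Filter.atTop ≤ γbar i / (1 - γbar i) := by
  intro σ x hx0 hx1 _ hstep i
  have hg_le : ∀ p j, γ p j ≤ γbar j := fun p j => (hγbar j).2 ⟨p, rfl⟩
  have hbar : ∀ j, 0 < γbar j ∧ γbar j < 1 / 2 := fun j => by
    obtain ⟨p, hp⟩ := (hγbar j).1
    rw [← hp]
    exact ⟨hγpos p j, hγhalf p j⟩
  have hcube : ∀ s, (∀ j, 0 ≤ x s j) ∧ ∀ j, x s j < 1 := by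
    intro s
    induction s with
    | zero => exact ⟨hx0, hx1⟩
    | succ s ih =>
      rw [hstep s]
      refine ⟨DF_nonneg (hγpos _) ih.2, fun j => ?_⟩
      refine (DF_le (hγpos _) (hγsum _) ih.1 ih.2 (hg_le _ j)
        (by linarith [(hbar j).2])).trans_lt ?_
      have h1 := ih.2 j
      have h2 := (hbar j).2
      rw [div_lt_one (by nlinarith [ih.1 j, (hbar j).1])]
      nlinarith
  obtain ⟨hg0, hg2⟩ := hbar i
  have hc0 : 0 < γbar i / (1 - γbar i) := div_pos hg0 (by linarith)
  have hc1 : γbar i / (1 - γbar i) < 1 := by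
    rw [div_lt_one (by linarith)]
    linarith
  obtain ⟨M, hcM, hxM, hM1⟩ : ∃ M, γbar i / (1 - γbar i) ≤ M ∧ x 0 i ≤ M ∧ M < 1 :=
    ⟨max (x 0 i) (γbar i / (1 - γbar i)), le_max_right _ _, le_max_left _ _, max_lt (hx1 i) hc1⟩
  have hM0 : 0 ≤ M := hc0.le.trans hcM
  have hbound : ∀ s, x s i ≤ M ∧ x s i ≤ γbar i / (1 - γbar i) + M ^ s := by
    intro s
    induction s with
    | zero => exact ⟨hxM, by rw [pow_zero]; linarith [hx1 i]⟩
    | succ s ih =>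
      have h := DF_le (hγpos (σ s)) (hγsum _) (hcube s).1 (hcube s).2 (hg_le _ i) (by linarith)
      obtain ⟨h1, h2⟩ := scalar_contraction hg0 hg2 hcM hM1 ih.1 (pow_nonneg hM0 s) ih.2
      rw [hstep s, pow_succ']
      exact ⟨h.trans h1, h.trans h2⟩
  have hlim : Filter.Tendsto (fun s : ℕ => γbar i / (1 - γbar i) + M ^ s) Filter.atTop
      (nhds (γbar i / (1 - γbar i))) := by
    simpa using (tendsto_pow_atTop_nhds_zero_of_lt_one hM0 hM1).const_add (γbar i / (1 - γbar i))
  rw [← hlim.limsup_eq]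
  refine Filter.limsup_le_limsup (Filter.Eventually.of_forall fun s => (hbound s).2) ?_
    hlim.isBoundedUnder_le
  exact Filter.IsCoboundedUnder.of_frequently_ge (a := 0)
    (Filter.Frequently.of_forall fun s => (hcube s).1 i)
end

section
/- Suppose γ_{p,i} < 1/3 for all p ∈ {1,…,P} and all i, and set β̄ = max_p max_i γ_{p,i}/(1 − γ_{p,i}) < 1/2. Then for any switching signal σ : ℕ → {1,…,P} and any two trajectories x(s+1) = F_{σ(s)}(x(s)), x'(s+1) = F_{σ(s)}(x'(s)) from initial conditions in Δ̃_n, there exist ε > 0 with 2β̄ − ε < 1 and a finite index s₁ such that, for all s ≥ s₁, ‖x(s+1) − x'(s+1)‖₁ ≤ (2β̄ − ε)·‖x(s) − x'(s)‖₁. -/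
/-!
Write `w = 1 / (1 - x_i)`. Along one step of the map, `w' ≤ 1 + β̄ (1 - c) w` whenever all
coordinates of the current point are at least `c` (`inv_one_sub_DF_le`). With `c = 0` and
`β̄ < 1/2` this keeps `w` bounded along a trajectory, so from time `1` on all coordinates are
bounded below by some `c > 0` (`le_DF`). The same recursion with this `c` then pushes every
coordinate eventually below `b = (1 - c/2) β̄ < β̄` (`eventually_le`).

For the contraction, put `a_i = γ_i / (1 - x_i)`, `a'_i = γ_i / (1 - y_i)`, with sums `A`, `A'`,
and suppose `A' ≤ A`. With `F = DF γ x`, `G = DF γ y` and `d = a - a'`, one has the exact identity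
`F_i - G_i = (d_i - G_i ∑ d_j) / A`. Taking absolute values and summing over `i` gives
`‖F - G‖₁ ≤ ∑_j 2 (1 - G_j) |d_j| / A ≤ ∑_j 2 G_j (1 - G_j) / (1 - x_j) |x_j - y_j|`, and each
coefficient is at most `2 b` once `G_j ≤ b` and `x_j ≤ b` with `b ≤ 1/2` (`norm1_DF_sub_le`).
-/

open Finset

section OneStep

variable {n : ℕ} {γ x : Fin n → ℝ}

lemma sum_weights_pos (hγ : ∀ i, 0 < γ i) (hs : ∑ i, γ i = 1) (hx : ∀ i, x i < 1) :
    0 < ∑ j, γ j / (1 - x j) := by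
  apply Finset.sum_pos
  · exact fun j _ => div_pos (hγ j) (sub_pos.2 (hx j))
  · rw [Finset.nonempty_iff_ne_empty]
    intro h
    rw [h] at hs
    simp at hs

lemma DF_pos (hγ : ∀ i, 0 < γ i) (hs : ∑ i, γ i = 1) (hx : ∀ i, x i < 1) (i : Fin n) :
    0 < DF γ x i :=
  mul_pos (inv_pos.2 (sum_weights_pos hγ hs hx)) (div_pos (hγ i) (sub_pos.2 (hx i)))

lemma DF_sum (hγ : ∀ i, 0 < γ i) (hs : ∑ i, γ i = 1) (hx : ∀ i, x i < 1) :
    ∑ i, DF γ x i = 1 := by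
  unfold DF
  rw [← Finset.mul_sum, inv_mul_cancel₀ (sum_weights_pos hγ hs hx).ne']

/-- The linear recursion for `1 / (1 - x_i)` along one step of the map. -/
lemma inv_one_sub_DF_le (hγ : ∀ i, 0 < γ i) (hs : ∑ i, γ i = 1) (hx : ∀ i, x i < 1)
    {c β : ℝ} (hc : ∀ i, c ≤ x i) (i : Fin n) (hγ1 : γ i < 1) (hβ : γ i / (1 - γ i) ≤ β) :
    DF γ x i < 1 ∧ 1 / (1 - DF γ x i) ≤ 1 + β * (1 - c) * (1 / (1 - x i)) := by
  have hS := sum_weights_pos hγ hs hx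
  have hc1 : 0 < 1 - c := by linarith [hc i, hx i]
  have hxi : 0 < 1 - x i := by linarith [hx i]
  have hg : 0 < 1 - γ i := by linarith
  have hrest : (1 - γ i) / (1 - c) ≤ ∑ j, γ j / (1 - x j) - γ i / (1 - x i) := by
    have h1 := Finset.sum_erase_eq_sub (f := γ) (Finset.mem_univ i)
    have h2 := Finset.sum_erase_eq_sub (f := fun j => γ j / (1 - x j)) (Finset.mem_univ i)
    rw [hs] at h1
    rw [← h2, ← h1, Finset.sum_div]
    apply Finset.sum_le_sum
    intro j _
    exact div_le_div_of_nonneg_left (hγ j).le (by linarith [hx j]) (by linarith [hc j])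
  have ha : 0 < γ i / (1 - x i) := div_pos (hγ i) hxi
  have hr : 0 < (1 - γ i) / (1 - c) := div_pos hg hc1
  have hDF : DF γ x i = (∑ j, γ j / (1 - x j))⁻¹ * (γ i / (1 - x i)) := rfl
  rw [hDF]
  set S := ∑ j, γ j / (1 - x j)
  set a := γ i / (1 - x i) with ha_def
  have hSa : 0 < S - a := by linarith
  have h1 : 1 - S⁻¹ * a = (S - a) / S := by field_simp
  constructor
  · have : 0 < (S - a) / S := div_pos hSa hS
    linarith
  · rw [h1, one_div_div]
    have h2 : S / (S - a) = 1 + a / (S - a) := by field_simp; ring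
    have h3 : a / (S - a) ≤ a / ((1 - γ i) / (1 - c)) :=
      div_le_div_of_nonneg_left ha.le hr hrest
    have h4 : a / ((1 - γ i) / (1 - c)) = γ i / (1 - γ i) * ((1 - c) * (1 / (1 - x i))) := by
      rw [ha_def]; field_simp
    have h5 : γ i / (1 - γ i) * ((1 - c) * (1 / (1 - x i))) ≤ β * ((1 - c) * (1 / (1 - x i))) :=
      mul_le_mul_of_nonneg_right hβ (by positivity)
    rw [h2]
    linarith

lemma le_DF (hγ : ∀ i, 0 < γ i) (hs : ∑ i, γ i = 1) (hx : ∀ i, x i < 1) (hx0 : ∀ i, 0 ≤ x i)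
    {g W : ℝ} (hg0 : 0 < g) (hg : ∀ i, g ≤ γ i) (hW : ∀ i, 1 / (1 - x i) ≤ W) (i : Fin n) :
    g / W ≤ DF γ x i := by
  have hS := sum_weights_pos hγ hs hx
  have hSW : ∑ j, γ j / (1 - x j) ≤ W := by
    calc ∑ j, γ j / (1 - x j) ≤ ∑ j, γ j * W := by
          apply Finset.sum_le_sum
          intro j _
          rw [div_eq_mul_one_div]
          exact mul_le_mul_of_nonneg_left (hW j) (hγ j).le
      _ = W := by rw [← Finset.sum_mul, hs, one_mul]
  have hai : g ≤ γ i / (1 - x i) := by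
    rw [le_div_iff₀ (by linarith [hx i])]
    nlinarith [hx0 i, hg i]
  unfold DF
  rw [inv_mul_eq_div]
  exact div_le_div₀ (hg0.le.trans hai) hai hS hSW

/-- The one-step contraction when the normalising sum at `y` is the smaller one. Exchanging `x`
and `y` covers the other case. -/
lemma norm1_DF_sub_le_aux {y : Fin n → ℝ} (hγ : ∀ i, 0 < γ i) (hs : ∑ i, γ i = 1)
    (hx : ∀ i, x i < 1) (hy : ∀ i, y i < 1) {b : ℝ} (hb : b ≤ 1 / 2)
    (hxb : ∀ i, x i ≤ b) (hGb : ∀ i, DF γ y i ≤ b)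
    (hle : ∑ j, γ j / (1 - y j) ≤ ∑ j, γ j / (1 - x j)) :
    norm1 (DF γ x - DF γ y) ≤ 2 * b * norm1 (x - y) := by
  have hA := sum_weights_pos hγ hs hx
  have hB := sum_weights_pos hγ hs hy
  have hG0 := DF_pos hγ hs hy
  have hG1 := DF_sum hγ hs hy
  have hG : ∀ i, DF γ y i = (∑ j, γ j / (1 - y j))⁻¹ * (γ i / (1 - y i)) := fun i => rfl
  have hF : ∀ i, DF γ x i = (∑ j, γ j / (1 - x j))⁻¹ * (γ i / (1 - x i)) := fun i => rfl
  set A := ∑ j, γ j / (1 - x j) with hAd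
  set B := ∑ j, γ j / (1 - y j) with hBd
  set G := DF γ y
  set d : Fin n → ℝ := fun j => γ j / (1 - x j) - γ j / (1 - y j) with hd
  have hdsum : ∑ j, d j = A - B := by simp [hd, hAd, hBd, Finset.sum_sub_distrib]
  have hdiff : ∀ i, DF γ x i - G i = ((1 - G i) * d i - G i * (∑ j, d j - d i)) / A := by
    intro i
    rw [hdsum, hF, hG]
    simp only [hd]
    field_simp
    ring
  have hbound : ∀ i, |DF γ x i - G i| ≤ ((1 - 2 * G i) * |d i| + G i * ∑ j, |d j|) / A := by
    intro i
    rw [hdiff, abs_div, abs_of_pos hA]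
    apply div_le_div_of_nonneg_right _ hA.le
    have h1 : |∑ j, d j - d i| ≤ ∑ j, |d j| - |d i| := by
      rw [← Finset.sum_erase_eq_sub (Finset.mem_univ i),
        ← Finset.sum_erase_eq_sub (f := fun j => |d j|) (Finset.mem_univ i)]
      exact Finset.abs_sum_le_sum_abs _ _
    have h2 : 0 ≤ 1 - G i := by linarith [hGb i]
    calc |(1 - G i) * d i - G i * (∑ j, d j - d i)|
        ≤ |(1 - G i) * d i| + |G i * (∑ j, d j - d i)| := abs_sub _ _
      _ = (1 - G i) * |d i| + G i * |∑ j, d j - d i| := by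
          rw [abs_mul, abs_mul, abs_of_nonneg h2, abs_of_pos (hG0 i)]
      _ ≤ (1 - G i) * |d i| + G i * (∑ j, |d j| - |d i|) := by
          have := mul_le_mul_of_nonneg_left h1 (hG0 i).le
          linarith
      _ = _ := by ring
  have hterm : ∀ j, 2 * (1 - G j) * |d j| / A ≤ 2 * b * |x j - y j| := by
    intro j
    have hxj : 0 < 1 - x j := by linarith [hx j]
    have hyj : 0 < 1 - y j := by linarith [hy j]
    have hdj : |d j| = γ j / (1 - y j) / (1 - x j) * |x j - y j| := by
      have : d j = γ j / (1 - y j) / (1 - x j) * (x j - y j) := by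
        simp only [hd]; field_simp; ring
      rw [this, abs_mul, abs_of_pos (div_pos (div_pos (hγ j) hyj) hxj)]
    have hGj : γ j / (1 - y j) / A ≤ G j := by
      rw [hG, inv_mul_eq_div]
      exact div_le_div_of_nonneg_left (div_pos (hγ j) hyj).le hB hle
    have h2 : 0 ≤ 1 - G j := by linarith [hGb j]
    -- `t ↦ t (1 - t)` is increasing on `t ≤ 1/2`
    have hquad : G j * (1 - G j) ≤ b * (1 - x j) := by
      nlinarith [hGb j, hxb j, hG0 j, mul_nonneg (sub_nonneg.2 (hGb j))
        (by linarith [hGb j] : 0 ≤ 1 - b - G j),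
        mul_nonneg ((hG0 j).le.trans (hGb j)) (sub_nonneg.2 (hxb j))]
    have hcoef : γ j / (1 - y j) / A * (1 - G j) / (1 - x j) ≤ b := by
      rw [div_le_iff₀ hxj]
      exact (mul_le_mul_of_nonneg_right hGj h2).trans hquad
    calc 2 * (1 - G j) * |d j| / A
        = 2 * (γ j / (1 - y j) / A * (1 - G j) / (1 - x j)) * |x j - y j| := by
          rw [hdj]; field_simp
      _ ≤ 2 * b * |x j - y j| :=
          mul_le_mul_of_nonneg_right (by linarith) (abs_nonneg _)
  calc norm1 (DF γ x - G) = ∑ i, |DF γ x i - G i| := rfl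
    _ ≤ ∑ i, ((1 - 2 * G i) * |d i| + G i * ∑ j, |d j|) / A :=
        Finset.sum_le_sum fun i _ => hbound i
    _ = ∑ j, 2 * (1 - G j) * |d j| / A := by
        rw [← Finset.sum_div, ← Finset.sum_div, Finset.sum_add_distrib, ← Finset.sum_mul, hG1,
          one_mul, ← Finset.sum_add_distrib]
        congr 1
        exact Finset.sum_congr rfl fun i _ => by ring
    _ ≤ ∑ j, 2 * b * |x j - y j| := Finset.sum_le_sum fun j _ => hterm j
    _ = 2 * b * norm1 (x - y) := by rw [← Finset.mul_sum]; rfl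

lemma norm1_sub_comm (u v : Fin n → ℝ) : norm1 (u - v) = norm1 (v - u) :=
  Finset.sum_congr rfl fun i _ => abs_sub_comm (u i) (v i)

lemma norm1_DF_sub_le {y : Fin n → ℝ} (hγ : ∀ i, 0 < γ i) (hs : ∑ i, γ i = 1)
    {b : ℝ} (hb : b ≤ 1 / 2) (hxb : ∀ i, x i ≤ b) (hyb : ∀ i, y i ≤ b)
    (hFb : ∀ i, DF γ x i ≤ b) (hGb : ∀ i, DF γ y i ≤ b) :
    norm1 (DF γ x - DF γ y) ≤ 2 * b * norm1 (x - y) := by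
  have hx : ∀ i, x i < 1 := fun i => by linarith [hxb i]
  have hy : ∀ i, y i < 1 := fun i => by linarith [hyb i]
  rcases le_total (∑ j, γ j / (1 - y j)) (∑ j, γ j / (1 - x j)) with h | h
  · exact norm1_DF_sub_le_aux hγ hs hx hy hb hxb hGb h
  · rw [norm1_sub_comm, norm1_sub_comm x y]
    exact norm1_DF_sub_le_aux hγ hs hy hx hb hyb hFb h

lemma lt_one_of_mem_punctSimplex (hx : x ∈ punctSimplex n) (i : Fin n) : x i < 1 := by
  obtain ⟨⟨h0, h1⟩, hv⟩ := hx
  by_contra hi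
  push Not at hi
  apply hv
  have h2 := Finset.sum_erase_eq_sub (f := x) (Finset.mem_univ i)
  have h3 : 0 ≤ ∑ j ∈ Finset.univ.erase i, x j := Finset.sum_nonneg fun j _ => h0 j
  have h4 : ∑ j ∈ Finset.univ.erase i, x j = 0 := by linarith
  rw [Finset.sum_eq_zero_iff_of_nonneg fun j _ => h0 j] at h4
  refine Set.mem_iUnion.2 ⟨i, ?_⟩
  rw [Set.mem_singleton_iff]
  funext j
  unfold vertex
  split_ifs with hj
  · subst hj; linarith
  · exact h4 j (by simp [hj])

end OneStep

/-- All coordinates of a trajectory eventually stay below a bound strictly less than `β̄`. -/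
lemma eventually_le {n P : ℕ} {γ : Fin P → Fin n → ℝ}
    (hγpos : ∀ p i, 0 < γ p i) (hγsum : ∀ p, ∑ i, γ p i = 1) (hγ1 : ∀ p i, γ p i < 1)
    {β g : ℝ} (hβ0 : 0 < β) (hβ2 : β < 1 / 2) (hβ : ∀ p i, γ p i / (1 - γ p i) ≤ β)
    (hg0 : 0 < g) (hg : ∀ p i, g ≤ γ p i)
    (σ : ℕ → Fin P) (x : ℕ → Fin n → ℝ) (hx0 : x 0 ∈ punctSimplex n)
    (hx : ∀ s, x (s + 1) = DF (γ (σ s)) (x s)) :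
    ∃ b < β, ∃ s₁ : ℕ, ∀ s ≥ s₁, ∀ i, x s i ≤ b := by
  obtain ⟨W, hW2, hW⟩ : ∃ W : ℝ, 2 ≤ W ∧ ∀ i, 1 / (1 - x 0 i) ≤ W := by
    have hnn : ∀ j, 0 ≤ 1 / (1 - x 0 j) := fun j =>
      (one_div_pos.2 (sub_pos.2 (lt_one_of_mem_punctSimplex hx0 j))).le
    refine ⟨2 + ∑ j, 1 / (1 - x 0 j), ?_, fun i => ?_⟩
    · linarith [Finset.sum_nonneg fun j (_ : j ∈ Finset.univ) => hnn j]
    · linarith [Finset.single_le_sum (f := fun j => 1 / (1 - x 0 j)) (fun j _ => hnn j)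
        (Finset.mem_univ i)]
  have hinv : ∀ s i, 0 ≤ x s i ∧ x s i < 1 ∧ 1 / (1 - x s i) ≤ W := by
    intro s
    induction s with
    | zero => exact fun i => ⟨hx0.1.1 i, lt_one_of_mem_punctSimplex hx0 i, hW i⟩
    | succ s ih =>
      intro i
      have h := inv_one_sub_DF_le (hγpos (σ s)) (hγsum (σ s)) (fun i => (ih i).2.1)
        (fun i => (ih i).1) i (hγ1 _ i) (hβ _ i)
      rw [← hx s] at h
      refine ⟨?_, h.1, h.2.trans ?_⟩
      · rw [hx s]
        exact (DF_pos (hγpos _) (hγsum _) (fun i => (ih i).2.1) i).le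
      · have h1 := (ih i).2.2
        have h2 : β * (1 / (1 - x s i)) ≤ 1 / 2 * W :=
          mul_le_mul hβ2.le h1 (one_div_pos.2 (by linarith [(ih i).2.1])).le (by norm_num)
        linarith
  have hW0 : 0 < W := by linarith
  set c := g / W with hc
  have hc0 : 0 < c := div_pos hg0 hW0
  have hlow : ∀ s i, c ≤ x (s + 1) i := by
    intro s i
    rw [hx s]
    exact le_DF (hγpos _) (hγsum _) (fun i => (hinv s i).2.1) (fun i => (hinv s i).1) hg0
      (hg _) (fun i => (hinv s i).2.2) i
  -- `Fin n` may be assumed inhabited, which yields `c < 1`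
  rcases isEmpty_or_nonempty (Fin n) with he | ⟨⟨i₀⟩⟩
  · exact ⟨β - 1, by linarith, 0, fun s _ i => he.elim i⟩
  have hc1 : c < 1 := (hlow 0 i₀).trans_lt (hinv 1 i₀).2.1
  set q := β * (1 - c) with hq
  have hq0 : 0 ≤ q := mul_nonneg hβ0.le (by linarith)
  set b := β * (1 - c / 2) with hb
  have hqb : q < b := mul_lt_mul_of_pos_left (by linarith) hβ0
  have hbβ : b < β := by nlinarith
  have hb1 : b < 1 := by linarith
  have hq1 : q < 1 := by linarith
  have hrec : ∀ s i, 1 / (1 - x (s + 1) i) ≤ 1 / (1 - q) + q ^ s * W := by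
    intro s
    induction s with
    | zero =>
      intro i
      have : 0 < 1 / (1 - q) := one_div_pos.2 (by linarith)
      simpa using (hinv 1 i).2.2.trans (by simpa using this.le)
    | succ s ih =>
      intro i
      have h := (inv_one_sub_DF_le (hγpos (σ (s + 1))) (hγsum (σ (s + 1)))
        (fun i => (hinv (s + 1) i).2.1) (hlow s) i (hγ1 _ i) (hβ _ i)).2
      rw [← hx (s + 1), ← hq] at h
      have h1 := mul_le_mul_of_nonneg_left (ih i) hq0
      -- `1 / (1 - q)` is the fixed point of `w ↦ 1 + q w`
      have h2 : 1 + q * (1 / (1 - q)) = 1 / (1 - q) := by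
        have : 1 - q ≠ 0 := by linarith
        field_simp
        ring
      rw [pow_succ]
      linarith
  have hlim : Filter.Tendsto (fun s : ℕ => 1 / (1 - q) + q ^ s * W) Filter.atTop
      (nhds (1 / (1 - q))) := by
    simpa using ((tendsto_pow_atTop_nhds_zero_of_lt_one hq0 hq1).mul_const W).const_add
      (1 / (1 - q))
  have hlt : 1 / (1 - q) < 1 / (1 - b) :=
    one_div_lt_one_div_of_lt (by linarith) (by linarith)
  obtain ⟨s₀, hs₀⟩ := Filter.eventually_atTop.1 (hlim.eventually (gt_mem_nhds hlt))
  refine ⟨b, hbβ, s₀ + 1, fun s hs i => ?_⟩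
  obtain ⟨t, rfl⟩ : ∃ t, s = t + 1 := ⟨s - 1, by omega⟩
  have h := (hrec t i).trans (hs₀ t (by omega)).le
  rw [one_div_le_one_div (by linarith [(hinv (t + 1) i).2.1]) (by linarith)] at h
  linarith

/-- suppose γ_{p,i} < 1/3 for all p, i, and let
β̄ = max_p max_i γ_{p,i}/(1 − γ_{p,i}) (< 1/2). Then for any switching signal σ
and any two trajectories from initial conditions in Δ̃ₙ there exist ε > 0 with
2β̄ − ε < 1 and a finite s₁ such that, for all s ≥ s₁,
‖x(s+1) − x'(s+1)‖₁ ≤ (2β̄ − ε)·‖x(s) − x'(s)‖₁. -/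
theorem stmt18 {n P : ℕ} (hn : 3 ≤ n) (hP : 1 ≤ P)
    (γ : Fin P → Fin n → ℝ)
    (hγpos : ∀ p i, 0 < γ p i) (hγsum : ∀ p, ∑ i, γ p i = 1)
    (hγthird : ∀ p i, γ p i < 1 / 3)
    (βbar : ℝ)
    (hβ : IsGreatest
      (Set.range fun pi : Fin P × Fin n => γ pi.1 pi.2 / (1 - γ pi.1 pi.2)) βbar) :
    βbar < 1 / 2 ∧
    ∀ σ : ℕ → Fin P, ∀ x x' : ℕ → Fin n → ℝ,
      x 0 ∈ punctSimplex n → x' 0 ∈ punctSimplex n →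
      (∀ s, x (s + 1) = DF (γ (σ s)) (x s)) →
      (∀ s, x' (s + 1) = DF (γ (σ s)) (x' s)) →
      ∃ ε > (0 : ℝ), 2 * βbar - ε < 1 ∧ ∃ s₁ : ℕ, ∀ s ≥ s₁,
        norm1 (x (s + 1) - x' (s + 1)) ≤ (2 * βbar - ε) * norm1 (x s - x' s) := by
  obtain ⟨⟨⟨p₀, i₀⟩, hp₀⟩, hub⟩ := hβ
  have hβ' : ∀ p i, γ p i / (1 - γ p i) ≤ βbar := fun p i => hub ⟨(p, i), rfl⟩
  have h1 : 0 < 1 - γ p₀ i₀ := by linarith [hγthird p₀ i₀]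
  have hβ0 : 0 < βbar := by
    rw [← hp₀]
    exact div_pos (hγpos _ _) h1
  have hβ2 : βbar < 1 / 2 := by
    rw [← hp₀]
    simp only
    rw [div_lt_iff₀ h1]
    linarith [hγthird p₀ i₀]
  refine ⟨hβ2, fun σ x x' hx0 hx0' hx hx' => ?_⟩
  have : Nonempty (Fin P × Fin n) := ⟨(p₀, i₀)⟩
  obtain ⟨m, hm⟩ := Finite.exists_min fun pi : Fin P × Fin n => γ pi.1 pi.2
  have hγ1 : ∀ p i, γ p i < 1 := fun p i => by linarith [hγthird p i]
  obtain ⟨b, hb, s₁, hs₁⟩ := eventually_le hγpos hγsum hγ1 hβ0 hβ2 hβ' (hγpos m.1 m.2)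
    (fun p i => hm (p, i)) σ x hx0 hx
  obtain ⟨b', hb', s₁', hs₁'⟩ := eventually_le hγpos hγsum hγ1 hβ0 hβ2 hβ' (hγpos m.1 m.2)
    (fun p i => hm (p, i)) σ x' hx0' hx'
  have hmax : max b b' < βbar := max_lt hb hb'
  refine ⟨2 * (βbar - max b b'), by linarith, by linarith, max s₁ s₁', fun s hs => ?_⟩
  have hsx : ∀ t ≥ max s₁ s₁', ∀ i, x t i ≤ max b b' := fun t ht i =>
    (hs₁ t ((le_max_left _ _).trans ht) i).trans (le_max_left _ _)
  have hsx' : ∀ t ≥ max s₁ s₁', ∀ i, x' t i ≤ max b b' := fun t ht i =>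
    (hs₁' t ((le_max_right _ _).trans ht) i).trans (le_max_right _ _)
  have key := norm1_DF_sub_le (hγpos (σ s)) (hγsum (σ s)) (by linarith : max b b' ≤ 1 / 2)
    (hsx s hs) (hsx' s hs)
    (by rw [← hx s]; exact hsx (s + 1) (by omega))
    (by rw [← hx' s]; exact hsx' (s + 1) (by omega))
  rw [← hx s, ← hx' s] at key
  calc _ ≤ _ := key
    _ = _ := by ring
end
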